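/- arXiv:1403.1473 — 2 statements merged into one kernel-verified Lean document; each statement's English description precedes it below -/
import Mathlib

section
/- Let N ≥ 1 and w : {0,…,N} → ℝ, and let λ_1 < λ_2 be the two smallest eigenvalues of J_w with unit eigenvectors v(λ_1), v(λ_2), where v(λ_1) is chosen componentwise positive and v_0(λ_2) > 0. Then the sequence (v_m(λ_2)/v_m(λ_1))_{m=0}^{N} is strictly decreasing; consequently the sequence (v_m(λ_2)² − v_m(λ_1)²)_{m=0}^{N} has at most two generalized zeros, and (by orthogonality of the eigenvectors) at least one generalized zero. -/
open scoped Classical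

/-- The hypercube Jacobi matrix `J_w`: the `(N+1) × (N+1)` real symmetric matrix with
diagonal entries `N + w m` and off-diagonal entries `-h(m)` with `h(m) = √((m+1)(N-m))`. -/
noncomputable def hypJ (N : ℕ) (w : ℕ → ℝ) : Matrix (Fin (N + 1)) (Fin (N + 1)) ℝ :=
  Matrix.of fun i j =>
    if i = j then (N : ℝ) + w (i : ℕ)
    else if (i : ℕ) + 1 = (j : ℕ) then
      -Real.sqrt (((i : ℕ) + 1) * ((N : ℝ) - (i : ℕ)))
    else if (j : ℕ) + 1 = (i : ℕ) then
      -Real.sqrt (((j : ℕ) + 1) * ((N : ℝ) - (j : ℕ)))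
    else 0

/-- `μ` is an eigenvalue of the real matrix `A`. -/
def IsEigen {n : ℕ} (A : Matrix (Fin n) (Fin n) ℝ) (μ : ℝ) : Prop :=
  ∃ v : Fin n → ℝ, v ≠ 0 ∧ A.mulVec v = μ • v

/-- `l1 < l2` are the two smallest eigenvalues of `A`. -/
def TwoSmallest {n : ℕ} (A : Matrix (Fin n) (Fin n) ℝ) (l1 l2 : ℝ) : Prop :=
  IsEigen A l1 ∧ IsEigen A l2 ∧ l1 < l2 ∧
    ∀ μ, IsEigen A μ → l1 ≤ μ ∧ (μ ≠ l1 → l2 ≤ μ)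

noncomputable def hypA (N m : ℕ) : ℝ := Real.sqrt ((m : ℝ) * ((N : ℝ) + 1 - m))

lemma hypA_zero (N : ℕ) : hypA N 0 = 0 := by simp [hypA]

lemma hypA_last (N : ℕ) : hypA N (N + 1) = 0 := by simp [hypA]

lemma hypA_pos (N m : ℕ) (hm : m < N) : 0 < hypA N (m + 1) := by
  unfold hypA
  apply Real.sqrt_pos.2
  have : (m : ℝ) < N := by exact_mod_cast hm
  push_cast
  apply mul_pos
  · positivity
  · linarith

lemma hypJ_symm (N : ℕ) (w : ℕ → ℝ) : (hypJ N w).IsHermitian := by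
  ext i j
  simp only [hypJ, Matrix.conjTranspose_apply, Matrix.of_apply, star_trivial]
  by_cases h : i = j
  · subst h; rfl
  · have h' : ¬ j = i := fun e => h e.symm
    rw [if_neg h, if_neg h']
    by_cases h1 : (i : ℕ) + 1 = j
    · have h2 : ¬ (j : ℕ) + 1 = i := by omega
      simp [h1, h2]
    · by_cases h2 : (j : ℕ) + 1 = i
      · simp [h1, h2]
      · simp [h1, h2]

lemma hypJ_mulVec (N : ℕ) (w v : ℕ → ℝ) (m : ℕ) (hm : m < N + 1) :
    (hypJ N w).mulVec (fun i : Fin (N + 1) => v (i : ℕ)) ⟨m, hm⟩ =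
      (N + w m) * v m - hypA N (m + 1) * v (m + 1) - hypA N m * v (m - 1) := by
  have key : ∀ j : ℕ, (if m = j then (N : ℝ) + w m
    else if m + 1 = j then
      -Real.sqrt (((m : ℕ) + 1) * ((N : ℝ) - (m : ℕ)))
    else if j + 1 = m then
      -Real.sqrt (((j : ℕ) + 1) * ((N : ℝ) - (j : ℕ)))
    else 0) * v j = (if m = j then ((N : ℝ) + w m) * v m else 0)
      + (if m + 1 = j then - hypA N (m+1) * v (m+1) else 0)
      + (if m - 1 = j then - hypA N m * v (m-1) else 0) := by
    intro j
    by_cases h0 : m = j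
    · subst h0
      rcases Nat.eq_zero_or_pos m with h | h
      · subst h; simp [hypA_zero]
      · have : ¬ m - 1 = m := by omega
        simp [this]
    · by_cases h1 : m + 1 = j
      · subst h1
        have : ¬ m - 1 = m + 1 := by omega
        simp [this, hypA]
      · by_cases h2 : j + 1 = m
        · subst h2
          have : ¬ (j + 1 + 1 = j) := by omega
          simp [this, hypA]
        · by_cases h3 : m - 1 = j
          · exfalso; omega
          · simp [h0, h1, h2, h3]
  simp only [Matrix.mulVec, dotProduct, hypJ, Matrix.of_apply, Fin.ext_iff]
  trans ∑ j : Fin (N + 1), ((if m = (j : ℕ) then ((N : ℝ) + w m) * v m else 0)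
      + (if m + 1 = (j : ℕ) then - hypA N (m+1) * v (m+1) else 0)
      + (if m - 1 = (j : ℕ) then - hypA N m * v (m-1) else 0))
  · exact Finset.sum_congr rfl fun j _ => by convert key (j : ℕ)
  rw [Fin.sum_univ_eq_sum_range (fun j => (if m = j then ((N : ℝ) + w m) * v m else 0)
      + (if m + 1 = j then - hypA N (m+1) * v (m+1) else 0)
      + (if m - 1 = j then - hypA N m * v (m-1) else 0)) (N+1)]
  rw [Finset.sum_add_distrib, Finset.sum_add_distrib, Finset.sum_ite_eq, Finset.sum_ite_eq,
    Finset.sum_ite_eq]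
  rw [if_pos (Finset.mem_range.2 hm), if_pos (Finset.mem_range.2 (by omega : m - 1 < N + 1))]
  by_cases h : m + 1 < N + 1
  · rw [if_pos (Finset.mem_range.2 h)]; ring
  · have : m = N := by omega
    subst this
    simp [hypA_last]; ring

noncomputable def hypD (N : ℕ) (v f : ℕ → ℝ) (k : ℕ) : ℝ :=
  hypA N k * v (k - 1) * v k * (f k - f (k - 1))

/-- ground state transform -/
lemma ground (N : ℕ) (w v1 f : ℕ → ℝ) (l1 : ℝ)
    (hv1e : (hypJ N w).mulVec (fun i : Fin (N + 1) => v1 (i : ℕ)) =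
      l1 • fun i : Fin (N + 1) => v1 (i : ℕ)) (m : ℕ) (hm : m < N + 1) :
    v1 m * (hypJ N w).mulVec (fun i : Fin (N + 1) => f i * v1 (i : ℕ)) ⟨m, hm⟩ =
      l1 * f m * v1 m ^ 2 + (hypD N v1 f m - hypD N v1 f (m + 1)) := by
  have h1 := congrFun hv1e ⟨m, hm⟩
  rw [hypJ_mulVec] at h1
  rw [hypJ_mulVec N w (fun i => f i * v1 i)]
  simp only [Pi.smul_apply, smul_eq_mul] at h1
  simp only [hypD, Nat.add_sub_cancel]
  linear_combination f m * v1 m * h1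

lemma sum_parts (D f : ℕ → ℝ) (h0 : D 0 = 0) (n : ℕ) :
    ∑ m ∈ Finset.range (n + 1), f m * (D m - D (m + 1)) =
      ∑ m ∈ Finset.range n, D (m + 1) * (f (m + 1) - f m) - f n * D (n + 1) := by
  induction n with
  | zero => simp [h0]
  | succ k ih =>
    rw [Finset.sum_range_succ, ih, Finset.sum_range_succ (fun m => D (m + 1) * (f (m + 1) - f m))]
    ring

lemma simple (N : ℕ) (w v1 f : ℕ → ℝ) (l1 : ℝ)
    (hv1e : (hypJ N w).mulVec (fun i : Fin (N + 1) => v1 (i : ℕ)) =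
      l1 • fun i : Fin (N + 1) => v1 (i : ℕ))
    (hpos : ∀ m : ℕ, m ≤ N → 0 < v1 m)
    (he : (hypJ N w).mulVec (fun i : Fin (N + 1) => f i * v1 (i : ℕ)) =
      l1 • fun i : Fin (N + 1) => f i * v1 (i : ℕ)) (m : ℕ) (hm : m ≤ N) : f m = f 0 := by
  have hD : ∀ m, m ≤ N → hypD N v1 f m = 0 := by
    intro m
    induction m with
    | zero => intro _; simp [hypD]
    | succ k ih =>
      intro hk
      have := ground N w v1 f l1 hv1e k (by omega)
      rw [he, ih (by omega)] at this
      simp only [Pi.smul_apply, smul_eq_mul] at this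
      linarith
  induction m with
  | zero => rfl
  | succ k ih =>
    rw [← ih (by omega)]
    have := hD (k+1) hm
    simp only [hypD, Nat.add_sub_cancel] at this
    have h1 := hypA_pos N k (by omega)
    have h2 := hpos k (by omega)
    have h3 := hpos (k+1) hm
    have h4 : hypA N (k+1) * v1 k * v1 (k+1) ≠ 0 := by positivity
    have := (mul_eq_zero.1 this).resolve_left h4
    linarith

lemma variational {n : ℕ} (A : Matrix (Fin n) (Fin n) ℝ) (hA : A.IsHermitian) (l1 l2 : ℝ)
    (v : Fin n → ℝ) (hl : ∀ μ, IsEigen A μ → μ ≠ l1 → l2 ≤ μ)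
    (hs : ∀ e : Fin n → ℝ, A.mulVec e = l1 • e → ∃ c : ℝ, e = c • v)
    (u : Fin n → ℝ) (hu : v ⬝ᵥ u = 0) : l2 * (u ⬝ᵥ u) ≤ u ⬝ᵥ A.mulVec u := by
  set b := hA.eigenvectorBasis
  set x : EuclideanSpace ℝ (Fin n) := WithLp.toLp 2 u
  set y : EuclideanSpace ℝ (Fin n) := WithLp.toLp 2 (A.mulVec u)
  have inn : ∀ p q : EuclideanSpace ℝ (Fin n), inner ℝ p q = p.ofLp ⬝ᵥ q.ofLp := by
    intro p q
    simp [PiLp.inner_apply, dotProduct, mul_comm]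
  have e1 : u ⬝ᵥ u = ∑ i, ((b i).ofLp ⬝ᵥ u) * ((b i).ofLp ⬝ᵥ u) := by
    have := b.sum_inner_mul_inner x x
    simp only [inn] at this
    rw [show u ⬝ᵥ u = x.ofLp ⬝ᵥ x.ofLp from rfl, ← this]
    refine Finset.sum_congr rfl fun i _ => ?_
    rw [dotProduct_comm x.ofLp]
  have hb : ∀ i, A.mulVec (b i).ofLp = hA.eigenvalues i • (b i).ofLp := fun i =>
    hA.mulVec_eigenvectorBasis i
  have e2 : u ⬝ᵥ A.mulVec u = ∑ i, ((b i).ofLp ⬝ᵥ u) * (hA.eigenvalues i * ((b i).ofLp ⬝ᵥ u)) := by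
    have := b.sum_inner_mul_inner x y
    simp only [inn] at this
    rw [show u ⬝ᵥ A.mulVec u = x.ofLp ⬝ᵥ y.ofLp from rfl, ← this]
    refine Finset.sum_congr rfl fun i _ => ?_
    rw [dotProduct_comm x.ofLp]
    congr 1
    change (b i).ofLp ⬝ᵥ A.mulVec u = _
    rw [Matrix.dotProduct_mulVec, ← Matrix.mulVec_transpose]
    have : A.transpose = A := by simpa [Matrix.IsHermitian, Matrix.conjTranspose_eq_transpose_of_trivial] using hA
    rw [this, hb, smul_dotProduct, smul_eq_mul]
  rw [e1, e2, Finset.mul_sum]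
  refine Finset.sum_le_sum fun i _ => ?_
  by_cases h : hA.eigenvalues i = l1
  · obtain ⟨c, hc⟩ := hs (b i).ofLp (by rw [hb, h])
    rw [hc, smul_dotProduct, hu]; simp
  · have h0 : (b i).ofLp ≠ 0 := by
      intro h0
      have := b.orthonormal.ne_zero i
      apply this
      ext j
      simpa using congrFun h0 j
    have := hl _ ⟨_, h0, hb i⟩ h
    nlinarith [mul_self_nonneg ((b i).ofLp ⬝ᵥ u)]

lemma var_sum (n : ℕ) (p f : ℕ → ℝ) (hp : ∑ i ∈ Finset.range n, p i = 1) :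
    ∑ i ∈ Finset.range n, ∑ j ∈ Finset.range n, p i * p j * (f i - f j) ^ 2 =
      2 * ∑ i ∈ Finset.range n, p i * (f i - ∑ j ∈ Finset.range n, p j * f j) ^ 2 := by
  set M := ∑ j ∈ Finset.range n, p j * f j with hM
  set Q := ∑ j ∈ Finset.range n, p j * f j ^ 2 with hQ
  have h1 : ∀ i, ∑ j ∈ Finset.range n, p i * p j * (f i - f j) ^ 2 =
      p i * f i ^ 2 - 2 * (p i * f i) * M + p i * Q := by
    intro i
    rw [hM, hQ, ← mul_one (p i * f i ^ 2), ← hp, Finset.mul_sum, Finset.mul_sum, Finset.mul_sum,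
      ← Finset.sum_sub_distrib, ← Finset.sum_add_distrib]
    refine Finset.sum_congr rfl fun j _ => ?_
    ring
  simp only [h1]
  have h2 : ∀ i, p i * (f i - M) ^ 2 = p i * f i ^ 2 - (p i * f i) * (2 * M) + p i * M ^ 2 := by
    intro i; ring
  simp only [h2, Finset.sum_add_distrib, Finset.sum_sub_distrib]
  rw [← Finset.sum_mul, ← Finset.sum_mul, ← Finset.sum_mul, ← Finset.sum_mul, ← Finset.mul_sum, hp,
    ← hM, ← hQ]
  ring

lemma var_lt (N : ℕ) (p g : ℕ → ℝ) (r : ℕ → ℝ) (hp : ∀ m ≤ N, 0 < p m)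
    (hp1 : ∑ i ∈ Finset.range (N + 1), p i = 1)
    (hr : ∑ i ∈ Finset.range (N + 1), p i * r i = 0)
    (hg : ∀ m < N, r (m + 1) - r m = g m) (k l : ℕ) (hk : k < N) (hl : l < N)
    (hgk : g k < 0) (hgl : 0 < g l) (f : ℕ → ℝ) (hf : ∀ m, f (m + 1) - f m = - |g m|) :
    ∑ i ∈ Finset.range (N + 1), p i * r i ^ 2 <
    ∑ i ∈ Finset.range (N + 1), p i * (f i - ∑ j ∈ Finset.range (N + 1), p j * f j) ^ 2 := by
  have hV := var_sum (N + 1) p r hp1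
  rw [hr] at hV
  simp only [sub_zero] at hV
  have hVf := var_sum (N + 1) p f hp1
  -- monotonicity
  have anti : ∀ i d, i + d ≤ N → f (i + d) - r (i + d) ≤ f i - r i ∧
      f (i + d) + r (i + d) ≤ f i + r i := by
    intro i d
    induction d with
    | zero => intro _; simp
    | succ d ih =>
      intro h
      have h1 := ih (by omega)
      have h2 := hf (i + d)
      have h3 := hg (i + d) (by omega)
      have h4 := le_abs_self (g (i + d))
      have h5 := neg_abs_le (g (i + d))
      rw [← add_assoc]
      constructor <;> linarith [h1.1, h1.2]
  have anti' : ∀ i j, i ≤ j → j ≤ N → f j - r j ≤ f i - r i ∧ f j + r j ≤ f i + r i := by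
    intro i j hij hj
    have := anti i (j - i) (by omega)
    rwa [Nat.add_sub_cancel' hij] at this
  have hle : ∀ i j, i ≤ N → j ≤ N → (r i - r j) ^ 2 ≤ (f i - f j) ^ 2 := by
    intro i j hi hj
    rcases le_total i j with h | h
    · have := anti' i j h hj
      nlinarith [mul_nonneg (sub_nonneg.2 this.1) (sub_nonneg.2 this.2)]
    · have := anti' j i h hi
      nlinarith [mul_nonneg (sub_nonneg.2 this.1) (sub_nonneg.2 this.2)]
  have hlt : (r 0 - r N) ^ 2 < (f 0 - f N) ^ 2 := by
    have a1 := (anti' 0 l (by omega) (by omega)).1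
    have a2 := (anti' (l+1) N (by omega) (by omega)).1
    have a3 := (anti' 0 k (by omega) (by omega)).2
    have a4 := (anti' (k+1) N (by omega) (by omega)).2
    have b1 := hf l
    have b2 := hg l hl
    have b3 := hf k
    have b4 := hg k hk
    rw [abs_of_pos hgl] at b1
    rw [abs_of_neg hgk] at b3
    have c1 : 0 < (f 0 - r 0) - (f N - r N) := by linarith
    have c2 : 0 < (f 0 + r 0) - (f N + r N) := by linarith
    nlinarith [mul_pos c1 c2]
  have main : ∑ i ∈ Finset.range (N + 1), ∑ j ∈ Finset.range (N + 1), p i * p j * (r i - r j) ^ 2 <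
      ∑ i ∈ Finset.range (N + 1), ∑ j ∈ Finset.range (N + 1), p i * p j * (f i - f j) ^ 2 := by
    have hm : ∀ i, i ∈ Finset.range (N+1) → i ≤ N := fun i hi => by
      have := Finset.mem_range.1 hi; omega
    have hterm : ∀ i ∈ Finset.range (N+1), ∀ j ∈ Finset.range (N+1),
        p i * p j * (r i - r j) ^ 2 ≤ p i * p j * (f i - f j) ^ 2 := fun i hi j hj =>
      mul_le_mul_of_nonneg_left (hle i j (hm i hi) (hm j hj))
        (mul_pos (hp i (hm i hi)) (hp j (hm j hj))).le
    refine Finset.sum_lt_sum (fun i hi => Finset.sum_le_sum (hterm i hi)) ⟨0, by simp, ?_⟩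
    refine Finset.sum_lt_sum (hterm 0 (by simp)) ⟨N, by simp, ?_⟩
    exact mul_lt_mul_of_pos_left hlt (mul_pos (hp 0 (by omega)) (hp N le_rfl))
  linarith

lemma zeros_part (N : ℕ) (v1 v2 : ℕ → ℝ)
    (hv1n : ∑ m ∈ Finset.range (N + 1), v1 m ^ 2 = 1)
    (hv2n : ∑ m ∈ Finset.range (N + 1), v2 m ^ 2 = 1)
    (hv1pos : ∀ m : ℕ, m ≤ N → 0 < v1 m)
    (hdec : ∀ m : ℕ, m < N → v2 (m + 1) / v1 (m + 1) < v2 m / v1 m) :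
    ((Finset.range (N + 1)).filter (fun m =>
        v2 m ^ 2 - v1 m ^ 2 = 0 ∨
        (m < N ∧ (v2 m ^ 2 - v1 m ^ 2) * (v2 (m + 1) ^ 2 - v1 (m + 1) ^ 2) < 0))).card
      ≤ 2 ∧
    ((Finset.range (N + 1)).filter (fun m =>
        v2 m ^ 2 - v1 m ^ 2 = 0 ∨
        (m < N ∧ (v2 m ^ 2 - v1 m ^ 2) * (v2 (m + 1) ^ 2 - v1 (m + 1) ^ 2) < 0))).Nonempty := by
  obtain ⟨r, hr⟩ : ∃ r : ℕ → ℝ, ∀ m, r m = v2 m / v1 m := ⟨_, fun _ => rfl⟩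
  simp only [← hr] at hdec
  have hv : ∀ m ≤ N, v2 m = r m * v1 m := fun m hm => by
    rw [hr, div_mul_cancel₀ _ (hv1pos m hm).ne']
  have hu : ∀ m ≤ N, v2 m ^ 2 - v1 m ^ 2 = v1 m ^ 2 * (r m ^ 2 - 1) := fun m hm => by
    rw [hv m hm]; ring
  have mono' : ∀ i d, i + d + 1 ≤ N → r (i + d + 1) < r i := by
    intro i d
    induction d with
    | zero => intro h; exact hdec i (by omega)
    | succ d ih => intro h; exact (hdec _ (by omega)).trans (ih (by omega))
  have mono : ∀ i j, i < j → j ≤ N → r j < r i := by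
    intro i j hij hj
    have := mono' i (j - i - 1) (by omega)
    rwa [show i + (j - i - 1) + 1 = j by omega] at this
  constructor
  · set P : ℝ → ℕ → Prop := fun t m => m ≤ N ∧ t ≤ r m ∧ ∀ j, m < j → j ≤ N → r j < t with hP
    have Puniq : ∀ t m m', P t m → P t m' → m = m' := by
      intro t m m' h h'
      rcases lt_trichotomy m m' with q | q | q
      · have := h.2.2 m' q h'.1; linarith [h'.2.1]
      · exact q
      · have := h'.2.2 m q h.1; linarith [h.2.1]
    have hsub : (Finset.range (N + 1)).filter (fun m =>
        v2 m ^ 2 - v1 m ^ 2 = 0 ∨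
        (m < N ∧ (v2 m ^ 2 - v1 m ^ 2) * (v2 (m + 1) ^ 2 - v1 (m + 1) ^ 2) < 0)) ⊆
        (Finset.range (N+1)).filter (P 1) ∪ (Finset.range (N+1)).filter (P (-1)) := by
      intro m hm
      rw [Finset.mem_filter] at hm
      obtain ⟨hmr, hm⟩ := hm
      have hmN : m ≤ N := by have := Finset.mem_range.1 hmr; omega
      suffices P 1 m ∨ P (-1) m by
        rw [Finset.mem_union, Finset.mem_filter, Finset.mem_filter]
        tauto
      have hpos := hv1pos m hmN
      rcases hm with hm | ⟨hlt, hm⟩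
      · rw [hu m hmN] at hm
        have h1 := (mul_eq_zero.1 hm).resolve_left (by positivity)
        have h2 : (r m - 1) * (r m + 1) = 0 := by linarith
        rcases mul_eq_zero.1 h2 with h3 | h3
        · left; exact ⟨hmN, by linarith, fun j hj hjN => by linarith [mono m j hj hjN]⟩
        · right; exact ⟨hmN, by linarith, fun j hj hjN => by linarith [mono m j hj hjN]⟩
      · rw [hu m hmN, hu (m+1) hlt] at hm
        have hpos' := hv1pos (m+1) hlt
        have h1 : (r m ^ 2 - 1) * (r (m+1) ^ 2 - 1) < 0 := by
          by_contra hc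
          push Not at hc
          have := mul_nonneg (mul_nonneg (sq_nonneg (v1 m)) (sq_nonneg (v1 (m+1)))) hc
          linarith
        have hd := hdec m hlt
        have ext : ∀ t, r (m+1) < t → ∀ j, m < j → j ≤ N → r j < t := by
          intro t ht j hj hjN
          rcases Nat.eq_or_lt_of_le (Nat.succ_le_of_lt hj) with q | q
          · rw [← q]; exact ht
          · exact (mono _ _ q hjN).trans ht
        rcases mul_neg_iff.1 h1 with ⟨ha, hb⟩ | ⟨ha, hb⟩
        · left
          have hb1 : r (m+1) < 1 := by nlinarith
          have hb2 : -1 < r (m+1) := by nlinarith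
          refine ⟨hmN, ?_, ext 1 hb1⟩
          nlinarith
        · right
          have hb1 : r m < 1 := by nlinarith
          have hb2 : -1 < r m := by nlinarith
          refine ⟨hmN, hb2.le, ext _ ?_⟩
          nlinarith
    refine (Finset.card_le_card hsub).trans ((Finset.card_union_le _ _).trans ?_)
    have hc : ∀ t, ((Finset.range (N+1)).filter (P t)).card ≤ 1 := by
      intro t
      rw [Finset.card_le_one]
      intro a ha b hb
      exact Puniq t a b (Finset.mem_filter.1 ha).2 (Finset.mem_filter.1 hb).2
    have := hc 1
    have := hc (-1)
    omega
  · by_contra hne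
    rw [Finset.not_nonempty_iff_eq_empty, Finset.filter_eq_empty_iff] at hne
    simp only [Finset.mem_range, not_or, not_and, not_lt] at hne
    obtain ⟨u, hu'⟩ : ∃ u : ℕ → ℝ, ∀ m, u m = v2 m ^ 2 - v1 m ^ 2 := ⟨_, fun _ => rfl⟩
    simp only [← hu'] at hne
    have hsum : ∑ m ∈ Finset.range (N+1), u m = 0 := by
      simp only [hu', Finset.sum_sub_distrib, hv1n, hv2n, sub_self]
    have hs : ∀ m, m ≤ N → 0 < u 0 * u m := by
      intro m
      induction m with
      | zero => intro _; exact mul_self_pos.2 (hne (x := 0) (by omega)).1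
      | succ k ih =>
        intro hk
        have h1 := ih (by omega)
        have h2 := (hne (x := k) (by omega)).2 (by omega)
        have h3 := (hne (x := k+1) (by omega)).1
        have h4 := (hne (x := k) (by omega)).1
        have h5 : 0 < u k * u (k+1) := lt_of_le_of_ne h2 (mul_ne_zero h4 h3).symm
        have h6 : 0 < (u k * u k) * (u 0 * u (k+1)) := by nlinarith [mul_pos h1 h5]
        exact pos_of_mul_pos_right h6 (mul_self_nonneg _)
    have : 0 < ∑ m ∈ Finset.range (N+1), u 0 * u m := Finset.sum_pos
      (fun m hm => hs m (by have := Finset.mem_range.1 hm; omega)) ⟨0, by simp⟩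
    rw [← Finset.mul_sum, hsum] at this
    simp at this

lemma dec_part (N : ℕ) (hN : 1 ≤ N) (w : ℕ → ℝ)
    (l1 l2 : ℝ) (h : TwoSmallest (hypJ N w) l1 l2)
    (v1 r : ℕ → ℝ)
    (hv1e : (hypJ N w).mulVec (fun i : Fin (N + 1) => v1 (i : ℕ)) =
      l1 • fun i : Fin (N + 1) => v1 (i : ℕ))
    (hv1n : ∑ m ∈ Finset.range (N + 1), v1 m ^ 2 = 1)
    (hv2e : (hypJ N w).mulVec (fun i : Fin (N + 1) => r i * v1 (i : ℕ)) =
      l2 • fun i : Fin (N + 1) => r i * v1 (i : ℕ))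
    (hpos : ∀ m : ℕ, m ≤ N → 0 < v1 m)
    (hr0 : 0 < r 0) : ∀ m : ℕ, m < N → r (m + 1) < r m := by
  obtain ⟨-, -, hlt, hl⟩ := h
  obtain ⟨D, hD⟩ : ∃ D : ℕ → ℝ, ∀ m, D m = hypD N v1 r m := ⟨_, fun _ => rfl⟩
  have hrec : ∀ m, m ≤ N → D m - D (m+1) = (l2 - l1) * (v1 m ^ 2 * r m) := by
    intro m hm
    have := ground N w v1 r l1 hv1e m (by omega)
    rw [hv2e] at this
    simp only [Pi.smul_apply, smul_eq_mul, ← hD] at this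
    linear_combination -this
  have hD0 : D 0 = 0 := by simp [hD, hypD]
  have hDN : D (N+1) = 0 := by simp [hD, hypD, hypA_last]
  obtain ⟨c, hc⟩ : ∃ c : ℕ → ℝ, ∀ m, c m = hypA N (m+1) * v1 m * v1 (m+1) := ⟨_, fun _ => rfl⟩
  have hcpos : ∀ m < N, 0 < c m := fun m hm => by
    rw [hc]
    exact mul_pos (mul_pos (hypA_pos N m hm) (hpos m hm.le)) (hpos (m+1) hm)
  have hDc : ∀ m, D (m+1) = c m * (r (m+1) - r m) := fun m => by simp [hD, hypD, hc]
  have hmean : ∑ m ∈ Finset.range (N+1), v1 m ^ 2 * r m = 0 := by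
    have h1 : ∑ m ∈ Finset.range (N+1), (D m - D (m+1)) = 0 := by
      rw [Finset.sum_range_sub', hD0, hDN, sub_zero]
    rw [Finset.sum_congr rfl (fun m hm => hrec m (by have := Finset.mem_range.1 hm; omega)),
      ← Finset.mul_sum] at h1
    exact (mul_eq_zero.1 h1).resolve_left (by linarith)
  have hg0 : r 1 - r 0 < 0 := by
    have h1 := hrec 0 (by omega)
    have h2 := hDc 0
    have h3 : 0 < (l2 - l1) * (v1 0 ^ 2 * r 0) :=
      mul_pos (by linarith) (mul_pos (pow_pos (hpos 0 (by omega)) 2) hr0)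
    have h4 := hcpos 0 (by omega)
    simp only [zero_add] at h1 h2
    by_contra hcon
    push Not at hcon
    have := mul_nonneg h4.le hcon
    linarith
  -- energy of r
  have hEr : ∑ m ∈ Finset.range N, c m * (r (m+1) - r m) ^ 2 =
      (l2 - l1) * ∑ m ∈ Finset.range (N+1), v1 m ^ 2 * r m ^ 2 := by
    have h1 := sum_parts D r hD0 N
    rw [hDN, mul_zero, sub_zero] at h1
    rw [Finset.mul_sum]
    trans ∑ m ∈ Finset.range N, D (m + 1) * (r (m + 1) - r m)
    · exact Finset.sum_congr rfl fun m _ => by rw [hDc]; ring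
    · rw [← h1]
      refine Finset.sum_congr rfl fun m hm => ?_
      rw [hrec m (by have := Finset.mem_range.1 hm; omega)]; ring
  -- Poincare inequality
  have hPoin : ∀ f : ℕ → ℝ, ∑ m ∈ Finset.range (N+1), v1 m ^ 2 * f m = 0 →
      (l2 - l1) * ∑ m ∈ Finset.range (N+1), v1 m ^ 2 * f m ^ 2 ≤
        ∑ m ∈ Finset.range N, c m * (f (m+1) - f m) ^ 2 := by
    intro f hf
    have hvar := variational (hypJ N w) (hypJ_symm N w) l1 l2 (fun i : Fin (N+1) => v1 i)
      (fun μ hμ => (hl μ hμ).2) (by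
        intro e he
        obtain ⟨q, hq⟩ : ∃ q : ℕ → ℝ, ∀ m (hm : m < N + 1), q m * v1 m = e ⟨m, hm⟩ :=
          ⟨fun m => if hm : m < N + 1 then e ⟨m, hm⟩ / v1 m else 0, fun m hm => by
            have := (hpos m (by omega)).ne'
            simp only [hm, dif_pos]
            field_simp⟩
        have hee : e = fun i : Fin (N+1) => q i * v1 i := by
          ext i; rw [hq i i.2]
        refine ⟨q 0, ?_⟩
        rw [hee] at he
        ext i
        rw [hee]
        simp only [Pi.smul_apply, smul_eq_mul]
        rw [simple N w v1 q l1 hv1e hpos he i (by omega)])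
      (fun i : Fin (N+1) => f i * v1 i) (by
        rw [← hf, dotProduct, Fin.sum_univ_eq_sum_range (fun i => v1 i * (f i * v1 i))]
        exact Finset.sum_congr rfl fun m _ => by ring)
    have e1 : (fun i : Fin (N+1) => f i * v1 i) ⬝ᵥ (fun i : Fin (N+1) => f i * v1 i) =
        ∑ m ∈ Finset.range (N+1), v1 m ^ 2 * f m ^ 2 := by
      rw [dotProduct, Fin.sum_univ_eq_sum_range (fun i => (f i * v1 i) * (f i * v1 i))]
      exact Finset.sum_congr rfl fun m _ => by ring
    have e2 : (fun i : Fin (N+1) => f i * v1 i) ⬝ᵥ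
        (hypJ N w).mulVec (fun i : Fin (N+1) => f i * v1 i) =
        l1 * ∑ m ∈ Finset.range (N+1), v1 m ^ 2 * f m ^ 2 +
        ∑ m ∈ Finset.range N, c m * (f (m+1) - f m) ^ 2 := by
      have hs := sum_parts (hypD N v1 f) f (by simp [hypD]) N
      rw [show hypD N v1 f (N+1) = 0 by simp [hypD, hypA_last], mul_zero, sub_zero] at hs
      have hs2 : ∑ m ∈ Finset.range N, c m * (f (m+1) - f m) ^ 2 =
          ∑ m ∈ Finset.range N, hypD N v1 f (m + 1) * (f (m + 1) - f m) :=
        Finset.sum_congr rfl fun m _ => by rw [hc]; simp only [hypD, Nat.add_sub_cancel]; ring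
      rw [hs2, ← hs, Finset.mul_sum, ← Finset.sum_add_distrib, ← Fin.sum_univ_eq_sum_range (fun m =>
        l1 * (v1 m ^ 2 * f m ^ 2) + f m * (hypD N v1 f m - hypD N v1 f (m+1))), dotProduct]
      refine Finset.sum_congr rfl fun i _ => ?_
      have := ground N w v1 f l1 hv1e i i.2
      simp only [Fin.eta] at this
      linear_combination f i * this
    rw [e1, e2] at hvar
    linarith
  -- nonincreasing
  have hle : ∀ m, m < N → r (m+1) - r m ≤ 0 := by
    intro m hm
    by_contra hcon
    push Not at hcon
    obtain ⟨f, hf⟩ : ∃ f : ℕ → ℝ, ∀ m, f (m+1) - f m = - |r (m+1) - r m| :=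
      ⟨fun n => ∑ i ∈ Finset.range n, - |r (i+1) - r i|, fun m => by
        simp only [Finset.sum_range_succ]; ring⟩
    have hv := var_lt N (fun m => v1 m ^ 2) (fun m => r (m+1) - r m) r
      (fun m hm => pow_pos (hpos m hm) 2) hv1n hmean (fun _ _ => rfl) 0 m (by omega) hm hg0 hcon f hf
    have hp := hPoin (fun m => f m - ∑ j ∈ Finset.range (N+1), v1 j ^ 2 * f j) (by
      simp only [mul_sub, Finset.sum_sub_distrib]
      rw [← Finset.sum_mul, hv1n]; ring)
    simp only [sub_sub_sub_cancel_right, hf, neg_sq, sq_abs] at hp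
    rw [hEr] at hp
    have := mul_lt_mul_of_pos_left hv (sub_pos.2 hlt)
    linarith
  have hDle : ∀ m, m ≤ N → D (m+1) ≤ 0 := by
    intro m hm
    rcases Nat.eq_or_lt_of_le hm with q | q
    · rw [q, hDN]
    · rw [hDc]; exact mul_nonpos_of_nonneg_of_nonpos (hcpos m q).le (hle m q)
  have hDlt : ∀ m, m < N → D (m+1) < 0 := by
    intro m
    induction m with
    | zero => intro _; rw [hDc]; exact mul_neg_of_pos_of_neg (hcpos 0 (by omega)) (by simpa using hg0)
    | succ k ih =>
      intro hk
      refine lt_of_le_of_ne (hDle _ hk.le) fun h0 => ?_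
      have h1 := ih (by omega)
      have h2 := hrec (k+1) (by omega)
      have h3 := hrec (k+2) (by omega)
      have h4 := hDle (k+2) (by omega)
      have h5 := hDc (k+1)
      rw [h0] at h5 h2
      have h6 := (mul_eq_zero.1 h5.symm).resolve_left (hcpos (k+1) hk).ne'
      rw [show D (k+2) = 0 from h0] at h3
      have h7 : r (k+2) = r (k+1) := by linarith [show r (k+1+1) = r (k+2) from rfl]
      have p1 := mul_pos (sub_pos.2 hlt) (pow_pos (hpos (k+1) (by omega)) 2)
      have p2 := mul_pos (sub_pos.2 hlt) (pow_pos (hpos (k+2) (by omega)) 2)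
      have q1 : r (k+1) < 0 := by
        by_contra hcon
        push Not at hcon
        nlinarith [mul_nonneg p1.le hcon]
      rw [h7] at h3
      nlinarith [mul_neg_of_pos_of_neg p2 q1, show D (k+2+1) = D (k+3) from rfl]
  intro m hm
  have h1 := hDlt m hm
  rw [hDc] at h1
  have := hcpos m hm
  by_contra hcon
  push Not at hcon
  nlinarith [mul_nonneg this.le (sub_nonneg.2 hcon)]

/-- for the two smallest eigenvalues `l1 < l2` of `J_w`, with `v1`
componentwise positive and `v2 0 > 0`, the sequence `v2 m / v1 m` is strictly
decreasing on `{0,…,N}`; consequently the sequence `v2 m ^ 2 - v1 m ^ 2` has at most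
two generalized zeros and at least one. -/
theorem hypercube_ratio_decreasing (N : ℕ) (hN : 1 ≤ N) (w : ℕ → ℝ)
    (l1 l2 : ℝ) (h : TwoSmallest (hypJ N w) l1 l2)
    (v1 v2 : ℕ → ℝ)
    (hv1e : (hypJ N w).mulVec (fun i : Fin (N + 1) => v1 (i : ℕ)) =
      l1 • fun i : Fin (N + 1) => v1 (i : ℕ))
    (hv1n : ∑ m ∈ Finset.range (N + 1), v1 m ^ 2 = 1)
    (hv2e : (hypJ N w).mulVec (fun i : Fin (N + 1) => v2 (i : ℕ)) =
      l2 • fun i : Fin (N + 1) => v2 (i : ℕ))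
    (hv2n : ∑ m ∈ Finset.range (N + 1), v2 m ^ 2 = 1)
    (hv1pos : ∀ m : ℕ, m ≤ N → 0 < v1 m)
    (hv20 : 0 < v2 0) :
    (∀ m : ℕ, m < N → v2 (m + 1) / v1 (m + 1) < v2 m / v1 m) ∧
    ((Finset.range (N + 1)).filter (fun m =>
        v2 m ^ 2 - v1 m ^ 2 = 0 ∨
        (m < N ∧ (v2 m ^ 2 - v1 m ^ 2) * (v2 (m + 1) ^ 2 - v1 (m + 1) ^ 2) < 0))).card
      ≤ 2 ∧
    ((Finset.range (N + 1)).filter (fun m =>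
        v2 m ^ 2 - v1 m ^ 2 = 0 ∨
        (m < N ∧ (v2 m ^ 2 - v1 m ^ 2) * (v2 (m + 1) ^ 2 - v1 (m + 1) ^ 2) < 0))).Nonempty := by
  have hv : ∀ m ≤ N, v2 m / v1 m * v1 m = v2 m := fun m hm =>
    div_mul_cancel₀ _ (hv1pos m hm).ne'
  have heq : (fun i : Fin (N + 1) => v2 (i : ℕ) / v1 i * v1 i) =
      fun i : Fin (N + 1) => v2 (i : ℕ) := by
    ext i
    exact hv i (by omega)
  have hdec := dec_part N hN w l1 l2 h v1 (fun m => v2 m / v1 m) hv1e hv1n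
    (by simpa only [heq] using hv2e) hv1pos (div_pos hv20 (hv1pos 0 (by omega)))
  exact ⟨hdec, zeros_part N v1 v2 hv1n hv2n hv1pos hdec⟩
end

section
/- For every integer N ≥ 2 and every linear potential L : {1,…,N} → ℝ (L_i = a·i + b for some a, b ∈ ℝ), the fundamental gap satisfies Γ(H_L(P_N)) ≥ 2(1 − cos(π/N)), with equality when a = 0. -/
/-- The path Schrödinger operator `H_W(P_N)`; vertex `i : Fin N` has label `i + 1`. -/
noncomputable def pathH (N : ℕ) (W : ℕ → ℝ) : Matrix (Fin N) (Fin N) ℝ :=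
  Matrix.of fun i j =>
    if i = j then
      (if (i : ℕ) = 0 ∨ (i : ℕ) = N - 1 then (1 : ℝ) else 2) + W ((i : ℕ) + 1)
    else if (i : ℕ) + 1 = (j : ℕ) ∨ (j : ℕ) + 1 = (i : ℕ) then -1 else 0

open Finset in
def pgip (N : ℕ) (U V : ℕ → ℝ) : ℝ := ∑ i ∈ range N, U (i+1) * V (i+1)

def pgNeu (N : ℕ) (U : ℕ → ℝ) : Prop := U 0 = U 1 ∧ ∀ k, N < k → U k = U N

open Finset in
def pgB (N : ℕ) (a b : ℝ) (U Y : ℕ → ℝ) : ℝ :=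
  ∑ i ∈ range (N+1), (U (i+1) - U i) * (Y (i+1) - Y i)
    + ∑ i ∈ range N, (a * ((i:ℝ)+1) + b) * (U (i+1) * Y (i+1))

def pgSol (N : ℕ) (a b l : ℝ) (U : ℕ → ℝ) : Prop :=
  ∀ i, i < N → U (i+2) + U i = (2 + (a * ((i:ℝ)+1) + b) - l) * U (i+1)

open Finset in
def pgX (N : ℕ) (U : ℕ → ℝ) : ℝ := ∑ i ∈ range N, ((i:ℝ)+1) * (U (i+1) * U (i+1))

open Finset in
lemma pg_parts (N : ℕ) (U Y : ℕ → ℝ) :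
    ∑ i ∈ range (N+1), (U (i+1) - U i) * (Y (i+1) - Y i)
      = ∑ i ∈ range N, (2 * U (i+1) - U (i+2) - U i) * Y (i+1)
        + (U (N+1) - U N) * Y (N+1) - (U 1 - U 0) * Y 0 := by
  induction N with
  | zero => simp; ring
  | succ n ih =>
    rw [sum_range_succ, ih, sum_range_succ _ n]
    ring

open Finset in
lemma pgB_eq {N : ℕ} {a b : ℝ} {U : ℕ → ℝ} (hU : pgNeu N U) (Y : ℕ → ℝ) :
    pgB N a b U Y = ∑ i ∈ range N,
      (2 * U (i+1) - U (i+2) - U i + (a * ((i:ℝ)+1) + b) * U (i+1)) * Y (i+1) := by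
  unfold pgB
  rw [pg_parts, hU.1, hU.2 (N+1) (by omega)]
  simp only [sub_self, zero_mul, add_zero, sub_zero]
  rw [← sum_add_distrib]
  apply sum_congr rfl
  intro i _
  ring

open Finset in
lemma pgB_sol {N : ℕ} {a b l : ℝ} {U : ℕ → ℝ} (hU : pgNeu N U) (hs : pgSol N a b l U)
    (Y : ℕ → ℝ) : pgB N a b U Y = l * pgip N U Y := by
  rw [pgB_eq hU, pgip, mul_sum]
  apply sum_congr rfl
  intro i hi
  have := hs i (mem_range.1 hi)
  linear_combination (-Y (i+1)) * this

open Finset in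
lemma pgB_comm (N : ℕ) (a b : ℝ) (U Y : ℕ → ℝ) : pgB N a b U Y = pgB N a b Y U := by
  unfold pgB
  congr 1 <;> (apply sum_congr rfl; intro i _; ring)

open Finset in
lemma pgip_comm (N : ℕ) (U Y : ℕ → ℝ) : pgip N U Y = pgip N Y U := by
  unfold pgip
  apply sum_congr rfl; intro i _; ring

open Finset in
lemma pgB_lin (N : ℕ) (a b s t : ℝ) (U V Y : ℕ → ℝ) :
    pgB N a b (fun k => s * U k + t * V k) Y = s * pgB N a b U Y + t * pgB N a b V Y := by
  unfold pgB
  simp only [mul_add, mul_sum]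
  rw [show ∀ p q r w : ℝ, p + q + (r + w) = (p + r) + (q + w) by intros; ring]
  simp only [← sum_add_distrib]
  congr 1 <;> (apply sum_congr rfl; intro i _; ring)

open Finset in
lemma pgip_lin (N : ℕ) (s t : ℝ) (U V Y : ℕ → ℝ) :
    pgip N (fun k => s * U k + t * V k) Y = s * pgip N U Y + t * pgip N V Y := by
  unfold pgip
  simp only [mul_sum, ← sum_add_distrib]
  apply sum_congr rfl; intro i _; ring

lemma pgB_sq (N : ℕ) (a b s t : ℝ) (U V : ℕ → ℝ) :
    pgB N a b (fun k => s * U k + t * V k) (fun k => s * U k + t * V k)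
     = s^2 * pgB N a b U U + 2 * s * t * pgB N a b U V + t^2 * pgB N a b V V := by
  rw [pgB_lin, pgB_comm N a b U, pgB_comm N a b V, pgB_lin, pgB_lin, pgB_comm N a b V U]
  ring

lemma pgip_sq (N : ℕ) (s t : ℝ) (U V : ℕ → ℝ) :
    pgip N (fun k => s * U k + t * V k) (fun k => s * U k + t * V k)
     = s^2 * pgip N U U + 2 * s * t * pgip N U V + t^2 * pgip N V V := by
  rw [pgip_lin, pgip_comm N U, pgip_comm N V, pgip_lin, pgip_lin, pgip_comm N V U]
  ring

lemma pgNeu_lin {N : ℕ} {U V : ℕ → ℝ} (s t : ℝ) (hU : pgNeu N U) (hV : pgNeu N V) :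
    pgNeu N (fun k => s * U k + t * V k) := by
  refine ⟨by simp only [hU.1, hV.1], fun k hk => ?_⟩
  simp only [hU.2 k hk, hV.2 k hk]

open Finset in
lemma pgip_nonneg (N : ℕ) (U : ℕ → ℝ) : 0 ≤ pgip N U U :=
  sum_nonneg fun i _ => mul_self_nonneg _

open Finset in
lemma pgB_shift (N : ℕ) (a a' b : ℝ) (U : ℕ → ℝ) :
    pgB N a' b U U = pgB N a b U U + (a' - a) * pgX N U := by
  unfold pgB pgX
  rw [add_assoc, mul_sum, ← sum_add_distrib]
  congr 1
  apply sum_congr rfl; intro i _; ring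

open Finset in
lemma pgX_bound (N : ℕ) (U : ℕ → ℝ) : 0 ≤ pgX N U ∧ pgX N U ≤ N * pgip N U U := by
  unfold pgX pgip
  refine ⟨sum_nonneg fun i _ => mul_nonneg (by positivity) (mul_self_nonneg _), ?_⟩
  rw [mul_sum]
  apply sum_le_sum
  intro i hi
  apply mul_le_mul_of_nonneg_right _ (mul_self_nonneg _)
  have := mem_range.1 hi
  exact_mod_cast this

/-- clamp a function to a Neumann one -/
def pgcl (N : ℕ) (y : ℕ → ℝ) : ℕ → ℝ := fun k => if k = 0 then y 1 else if N < k then y N else y k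

lemma pgcl_neu {N : ℕ} (hN : 1 ≤ N) (y : ℕ → ℝ) : pgNeu N (pgcl N y) := by
  refine ⟨?_, fun k hk => ?_⟩
  · unfold pgcl
    simp only [if_true]
    rw [if_neg (by omega), if_neg (by omega)]
  · unfold pgcl
    rw [if_neg (by omega), if_pos hk, if_neg (by omega), if_neg (by omega)]

lemma pgcl_eq {N : ℕ} (y : ℕ → ℝ) {i : ℕ} (hi : i < N) : pgcl N y (i+1) = y (i+1) := by
  unfold pgcl
  rw [if_neg (by omega), if_neg (by omega)]

lemma pg_quad {c q : ℝ} (h : ∀ t : ℝ, 0 ≤ 2 * t * c + t^2 * q) : c = 0 := by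
  by_contra hc
  have hq := h (-c / (|q| + 1))
  have hp : 0 < |q| + 1 := by positivity
  have e : 2 * (-c / (|q| + 1)) * c + (-c / (|q| + 1))^2 * q
      = c^2 / (|q|+1)^2 * (q - 2 * (|q| + 1)) := by
    field_simp
    ring
  rw [e] at hq
  have h1 : 0 < c^2 / (|q|+1)^2 := by positivity
  have h2 : q - 2 * (|q| + 1) < 0 := by have := le_abs_self q; linarith [abs_nonneg q]
  nlinarith

/-- constrained minimisers are eigenvectors; `u = 0` is the unconstrained case -/
lemma pg_var {N : ℕ} (hN : 1 ≤ N) {a b l l1 : ℝ} {u w : ℕ → ℝ}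
    (hu : pgNeu N u) (hsu : pgSol N a b l1 u)
    (hw : pgNeu N w) (huw : pgip N u w = 0)
    (hmin : ∀ Y, pgNeu N Y → pgip N u Y = 0 → l * pgip N Y Y ≤ pgB N a b Y Y)
    (heq : pgB N a b w w ≤ l * pgip N w w) : pgSol N a b l w := by
  set R : ℕ → ℝ := pgcl N (fun k => 2 * w k - w (k+1) - w (k-1) + (a * (k:ℝ) + b) * w k - l * w k)
    with hR
  have hRN : pgNeu N R := pgcl_neu hN _
  have hRi : ∀ i, i < N → R (i+1) = 2 * w (i+1) - w (i+2) - w i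
      + (a * ((i:ℝ)+1) + b) * w (i+1) - l * w (i+1) := by
    intro i hi
    rw [hR, pgcl_eq _ hi]
    simp
  have key : ∀ Y, pgB N a b w Y - l * pgip N w Y = pgip N R Y := by
    intro Y
    rw [pgB_eq hw, pgip, pgip, Finset.mul_sum, ← Finset.sum_sub_distrib]
    apply Finset.sum_congr rfl
    intro i hi
    rw [hRi i (Finset.mem_range.1 hi)]
    ring
  have huR : pgip N u R = 0 := by
    have h1 := key u
    rw [pgB_comm, pgB_sol hu hsu, pgip_comm N w u, huw, pgip_comm N R u] at h1
    linarith
  have hRR : pgip N R R = 0 := by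
    apply pg_quad (q := pgB N a b R R - l * pgip N R R)
    intro t
    have h1 := hmin (fun k => 1 * w k + t * R k) (pgNeu_lin 1 t hw hRN)
      (by rw [pgip_comm, pgip_lin, pgip_comm N w, pgip_comm N R, huw, huR]; ring)
    rw [pgB_sq, pgip_sq] at h1
    have h2 := key R
    linear_combination h1 + heq + (2 * t) * h2
  have hz : ∀ i ∈ Finset.range N, R (i+1) * R (i+1) = 0 :=
    (Finset.sum_eq_zero_iff_of_nonneg (fun i _ => mul_self_nonneg _)).1 hRR
  intro i hi
  have h3 := mul_self_eq_zero.1 (hz i (Finset.mem_range.2 hi))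
  rw [hRi i hi] at h3
  linarith


open Finset in
lemma pg_exists_min {N : ℕ} (hN : 1 ≤ N) (a b : ℝ) (c : ℕ → ℝ)
    (hne : ∃ Y, pgNeu N Y ∧ pgip N c Y = 0 ∧ pgip N Y Y = 1) :
    ∃ w, pgNeu N w ∧ pgip N c w = 0 ∧ pgip N w w = 1 ∧
      ∀ Y, pgNeu N Y → pgip N c Y = 0 → pgB N a b w w * pgip N Y Y ≤ pgB N a b Y Y := by
  set K : Set (ℕ → ℝ) := {Y | pgNeu N Y ∧ pgip N c Y = 0 ∧ pgip N Y Y = 1} with hK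
  have hcB : Continuous fun Y : ℕ → ℝ => pgB N a b Y Y := by unfold pgB; fun_prop
  have hci : Continuous fun Y : ℕ → ℝ => pgip N Y Y := by unfold pgip; fun_prop
  have hcc : Continuous fun Y : ℕ → ℝ => pgip N c Y := by unfold pgip; fun_prop
  have hbd : ∀ Y, pgip N Y Y = 1 → ∀ i, i < N → Y (i+1) ∈ Set.Icc (-1:ℝ) 1 := by
    intro Y h i hi
    have h1 : Y (i+1) * Y (i+1) ≤ 1 := by
      rw [← h]
      exact single_le_sum (f := fun i => Y (i+1) * Y (i+1)) (fun j _ => mul_self_nonneg _)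
        (mem_range.2 hi)
    exact ⟨by nlinarith, by nlinarith⟩
  have hKc : IsCompact K := by
    apply IsCompact.of_isClosed_subset
      (isCompact_univ_pi (fun _ : ℕ => isCompact_Icc (a := (-1:ℝ)) (b := 1)))
    · have e : K = ({Y | Y 0 = Y 1} ∩ ⋂ k, ⋂ (_ : N < k), {Y | Y k = Y N})
          ∩ ({Y | pgip N c Y = 0} ∩ {Y | pgip N Y Y = 1}) := by
        ext Y
        simp [hK, pgNeu]
      rw [e]
      refine IsClosed.inter (IsClosed.inter ?_ ?_) (IsClosed.inter ?_ ?_)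
      · exact isClosed_eq (by fun_prop) (by fun_prop)
      · exact isClosed_iInter fun k => isClosed_iInter fun _ =>
          isClosed_eq (by fun_prop) (by fun_prop)
      · exact isClosed_eq hcc continuous_const
      · exact isClosed_eq hci continuous_const
    · intro Y hY k _
      obtain ⟨h1, _, h3⟩ := hY
      rcases Nat.eq_zero_or_pos k with h | h
      · subst h; rw [h1.1]; exact hbd Y h3 0 (by omega)
      · by_cases hk : N < k
        · rw [h1.2 k hk]
          have := hbd Y h3 (N-1) (by omega)
          rwa [Nat.sub_add_cancel hN] at this
        · have := hbd Y h3 (k-1) (by omega)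
          rwa [Nat.sub_add_cancel h] at this
  obtain ⟨w, hw, hmin⟩ := hKc.exists_isMinOn hne hcB.continuousOn
  refine ⟨w, hw.1, hw.2.1, hw.2.2, ?_⟩
  intro Y hY hcY
  by_cases h0 : pgip N Y Y = 0
  · have hz : ∀ i ∈ Finset.range N, Y (i+1) * Y (i+1) = 0 :=
      (Finset.sum_eq_zero_iff_of_nonneg (fun i _ => mul_self_nonneg _)).1 h0
    have : pgB N a b Y Y = 0 := by
      rw [pgB_eq hY]
      apply sum_eq_zero
      intro i hi
      rw [mul_self_eq_zero.1 (hz i hi)]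
      ring
    rw [h0, this]; simp
  · have hp : 0 < pgip N Y Y := lt_of_le_of_ne (pgip_nonneg N Y) (Ne.symm h0)
    set s := (Real.sqrt (pgip N Y Y))⁻¹ with hs
    have hs2 : s^2 * pgip N Y Y = 1 := by
      rw [hs, inv_pow, Real.sq_sqrt hp.le, inv_mul_cancel₀ h0]
    have h1 := hmin (a := fun k => s * Y k + 0 * Y k) ⟨pgNeu_lin s 0 hY hY, by
      rw [pgip_comm, pgip_lin, pgip_comm N Y, hcY]; ring, by
      rw [pgip_sq]; linarith⟩
    simp only [Set.mem_ofPred_eq] at h1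
    rw [pgB_sq] at h1
    have h2 : pgB N a b w w * pgip N Y Y ≤ (s^2 * pgB N a b Y Y) * pgip N Y Y := by
      apply mul_le_mul_of_nonneg_right _ hp.le
      linarith
    calc _ ≤ _ := h2
      _ = (s^2 * pgip N Y Y) * pgB N a b Y Y := by ring
      _ = _ := by rw [hs2, one_mul]

lemma pg_sol_zero {N : ℕ} {a b l : ℝ} {U : ℕ → ℝ} (hU : pgNeu N U) (hs : pgSol N a b l U)
    (h1 : U 1 = 0) : ∀ i, i ≤ N → U i = 0 ∧ U (i+1) = 0 := by
  intro i
  induction i with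
  | zero => intro _; exact ⟨hU.1.trans h1, h1⟩
  | succ n ih =>
    intro h
    obtain ⟨e1, e2⟩ := ih (by omega)
    have := hs n (by omega)
    rw [e1, e2] at this
    exact ⟨e2, by simpa using this⟩

open Finset in
lemma pg_ground {N : ℕ} (hN : 2 ≤ N) (a b : ℝ) : ∃ (l : ℝ) (u : ℕ → ℝ),
    pgNeu N u ∧ pgSol N a b l u ∧ pgip N u u = 1 ∧ (∀ k, 0 < u k) ∧
    (∀ Y, pgNeu N Y → l * pgip N Y Y ≤ pgB N a b Y Y) := by
  have hzip : ∀ Y, pgip N (fun _ => 0) Y = 0 := by intro Y; simp [pgip]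
  have hNr : (0:ℝ) < N := by exact_mod_cast (by omega : 0 < N)
  obtain ⟨w, hw, _, hw1, hmin⟩ := pg_exists_min (N := N) (by omega) a b (fun _ => 0)
    ⟨fun _ => (Real.sqrt N)⁻¹, ⟨rfl, fun _ _ => rfl⟩, hzip _, by
      simp only [pgip, sum_const, card_range, nsmul_eq_mul]
      rw [← mul_inv, Real.mul_self_sqrt hNr.le]
      field_simp⟩
  set l := pgB N a b w w with hl
  set u : ℕ → ℝ := fun k => |w k| with hu
  have hun : pgNeu N u := ⟨by simp [hu, hw.1], fun k hk => by simp [hu, hw.2 k hk]⟩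
  have hu1 : pgip N u u = 1 := by rw [← hw1]; simp [pgip, hu]
  have hmin' : ∀ Y, pgNeu N Y → l * pgip N Y Y ≤ pgB N a b Y Y := fun Y hY => hmin Y hY (hzip Y)
  have hle : pgB N a b u u ≤ l * pgip N u u := by
    rw [hu1, mul_one, hl]
    unfold pgB
    apply add_le_add
    · apply sum_le_sum
      intro i _
      have := abs_abs_sub_abs_le_abs_sub (w (i+1)) (w i)
      rw [← sq, ← sq]
      exact sq_le_sq.2 this
    · apply sum_le_sum
      intro i _
      simp [hu]
  have hs : pgSol N a b l u := by
    apply pg_var (N := N) (by omega) (u := fun _ => 0) (l1 := 0) ⟨rfl, fun _ _ => rfl⟩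
      (by intro i _; simp) hun (hzip _) (fun Y hY _ => hmin' Y hY) hle
  have hnn : ∀ k, 0 ≤ u k := fun k => abs_nonneg _
  have h1 : 0 < u 1 := by
    rcases (hnn 1).lt_or_eq with h | h
    · exact h
    · exfalso
      have := pg_sol_zero hun hs h.symm
      have h0 : pgip N u u = 0 := by
        apply sum_eq_zero
        intro i hi
        rw [(this i (mem_range.1 hi).le).2]; ring
      linarith
  have hpos : ∀ k, k < N → 0 < u (k+1) := by
    intro k
    induction k with
    | zero => intro _; exact h1
    | succ n ih =>
      intro h
      have i1 := ih (by omega)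
      rcases (hnn (n+2)).lt_or_eq with h2 | h2
      · exact h2
      · exfalso
        have := hs (n+1) h
        rw [show n + 1 + 1 = n + 2 by ring, ← h2, mul_zero] at this
        linarith [hnn (n+1+2)]
  refine ⟨l, u, hun, hs, hu1, ?_, hmin'⟩
  intro k
  rcases Nat.eq_zero_or_pos k with h | h
  · rw [h, hun.1]; exact h1
  · by_cases hk : N < k
    · rw [hun.2 k hk]
      have := hpos (N-1) (by omega)
      rwa [Nat.sub_add_cancel (by omega)] at this
    · have := hpos (k-1) (by omega)
      rwa [Nat.sub_add_cancel h] at this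

/-- energy identity relative to the ground state -/
lemma pg_energy {N : ℕ} {a b l : ℝ} {u : ℕ → ℝ} (hu : pgNeu N u) (hs : pgSol N a b l u)
    (p : ℕ → ℝ) :
    pgB N a b (fun k => u k * p k) (fun k => u k * p k)
      = l * pgip N (fun k => u k * p k) (fun k => u k * p k)
        + ∑ i ∈ Finset.range (N+1), u i * u (i+1) * (p (i+1) - p i)^2 := by
  have h := pgB_sol hu hs (fun k => u k * (p k)^2)
  have e1 : pgip N (fun k => u k * p k) (fun k => u k * p k) = pgip N u (fun k => u k * (p k)^2) := by
    unfold pgip; apply Finset.sum_congr rfl; intro i _; ring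
  rw [e1, ← h]
  unfold pgB
  rw [add_right_comm, ← Finset.sum_add_distrib]
  congr 1 <;> (apply Finset.sum_congr rfl; intro i _; ring)

open Finset in
lemma pg_double (N : ℕ) (m p : ℕ → ℝ) (q : ℕ → ℝ) :
    ∑ i ∈ range N, ∑ j ∈ range N, m i * m j * ((p i - p j) * (q i - q j))
      = 2 * ((∑ i ∈ range N, m i) * (∑ i ∈ range N, m i * (p i * q i))
        - (∑ i ∈ range N, m i * p i) * (∑ i ∈ range N, m i * q i)) := by
  have e : ∀ i j, m i * m j * ((p i - p j) * (q i - q j)) =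
     (m i * (p i * q i)) * m j + m i * (m j * (p j * q j)) - (m i * p i) * (m j * q j)
       - (m i * q i) * (m j * p j) := by intros; ring
  simp only [e, sum_sub_distrib, sum_add_distrib, ← mul_sum, ← sum_mul]
  ring


structure pgData (N : ℕ) (a b l1 l2 : ℝ) (u v : ℕ → ℝ) : Prop where
  hu : pgNeu N u
  hv : pgNeu N v
  su : pgSol N a b l1 u
  sv : pgSol N a b l2 v
  uu : pgip N u u = 1
  vv : pgip N v v = 1
  uv : pgip N u v = 0
  pos : ∀ k, 0 < u k
  m1 : ∀ Y, pgNeu N Y → l1 * pgip N Y Y ≤ pgB N a b Y Y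
  m2 : ∀ Y, pgNeu N Y → pgip N u Y = 0 → l2 * pgip N Y Y ≤ pgB N a b Y Y
  lt : l1 < l2
  mono : ∀ i, 0 ≤ u i * v (i+1) - u (i+1) * v i

open Finset in
lemma pg_data {N : ℕ} (hN : 2 ≤ N) (a b : ℝ) : ∃ l1 l2 u v, pgData N a b l1 l2 u v := by
  obtain ⟨l1, u, hu, su, uu, pos, m1⟩ := pg_ground hN a b
  have hne : ∃ Y, pgNeu N Y ∧ pgip N u Y = 0 ∧ pgip N Y Y = 1 := by
    set y : ℕ → ℝ := pgcl N (fun k => if k = 1 then u 2 else if k = 2 then - u 1 else 0) with hy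
    have hyN : pgNeu N y := pgcl_neu (by omega) _
    have hyi : ∀ i, i < N → y (i+1) = if i = 0 then u 2 else if i = 1 then - u 1 else 0 := by
      intro i hi
      rw [hy, pgcl_eq _ hi]
      simp
    obtain ⟨n, rfl⟩ : ∃ n, N = n + 2 := ⟨N - 2, by omega⟩
    have huy : pgip (n+2) u y = 0 := by
      have : ∀ i ∈ range (n+2), u (i+1) * y (i+1) =
          u (i+1) * (if i = 0 then u 2 else if i = 1 then - u 1 else 0) := by
        intro i hi; rw [hyi i (mem_range.1 hi)]
      unfold pgip
      rw [sum_congr rfl this, sum_range_succ', sum_range_succ']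
      simp
      ring
    have hyy : 0 < pgip (n+2) y y := by
      apply sum_pos' (fun i _ => mul_self_nonneg _)
      refine ⟨0, by simp, ?_⟩
      rw [hyi 0 (by omega)]
      simp [(pos 2)]
    refine ⟨fun k => (Real.sqrt (pgip (n+2) y y))⁻¹ * y k + 0 * y k, pgNeu_lin _ _ hyN hyN, ?_, ?_⟩
    · rw [pgip_comm, pgip_lin, pgip_comm _ y u, huy]; ring
    · rw [pgip_sq, inv_pow, Real.sq_sqrt hyy.le, inv_mul_cancel₀ hyy.ne']; ring
  obtain ⟨w0, hw, huw, hww, hmin⟩ := pg_exists_min (N := N) (by omega) a b u hne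
  set l2 := pgB N a b w0 w0 with hl2
  set f : ℕ → ℝ := fun k => w0 k / u k with hf
  have hfw : ∀ k, u k * f k = w0 k := fun k => mul_div_cancel₀ _ (pos k).ne'
  have hfw' : (fun k => u k * f k) = w0 := funext hfw
  set F : ℕ → ℝ := fun k => ∑ j ∈ range k, |f (j+1) - f j| with hF
  have hFs : ∀ k, F (k+1) - F k = |f (k+1) - f k| := by
    intro k; simp only [hF]; rw [sum_range_succ]; ring
  have hfN : pgNeu N f := ⟨by simp only [hf, hw.1, hu.1], fun k hk => by
    simp only [hf, hw.2 k hk, hu.2 k hk]⟩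
  have hFN : pgNeu N F := by
    refine ⟨?_, ?_⟩
    · have := hFs 0
      rw [zero_add, hfN.1] at this
      simp at this; linarith
    · have : ∀ d, F (N + d) = F N := by
        intro d
        induction d with
        | zero => rfl
        | succ d ih =>
          have h1 := hFs (N+d)
          have e2 : f (N + d + 1) = f N := hfN.2 _ (by omega)
          have e1 : f (N + d) = f N := by
            rcases Nat.eq_zero_or_pos d with h | h
            · rw [h]; rfl
            · exact hfN.2 _ (by omega)
          rw [e1, e2, sub_self, abs_zero] at h1
          rw [← ih, ← add_assoc]; linarith
      intro k hk
      obtain ⟨d, rfl⟩ : ∃ d, k = N + d := ⟨k - N, by omega⟩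
      exact this d
  have hdom : ∀ i d, |f (i+d) - f i| ≤ F (i+d) - F i := by
    intro i d
    induction d with
    | zero => simp
    | succ d ih =>
      have h1 := hFs (i+d)
      have h2 := abs_add_le (f (i+(d+1)) - f (i+d)) (f (i+d) - f i)
      rw [sub_add_sub_cancel] at h2
      rw [← add_assoc] at h2 ⊢
      linarith
  have hdom2 : ∀ i j, (f i - f j)*(f i - f j) ≤ (F i - F j) * (F i - F j) := by
    have aux : ∀ i d, (f (i+d) - f i)*(f (i+d) - f i) ≤ (F (i+d) - F i) * (F (i+d) - F i) := by
      intro i d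
      have h := hdom i d
      rw [← abs_mul_abs_self (f (i+d) - f i)]
      exact mul_self_le_mul_self (abs_nonneg _) h
    intro i j
    rcases le_total i j with h | h
    · obtain ⟨d, rfl⟩ := Nat.exists_eq_add_of_le h
      have := aux i d
      linarith
    · obtain ⟨d, rfl⟩ := Nat.exists_eq_add_of_le h
      exact aux j d
  set c := ∑ i ∈ range N, u (i+1) * u (i+1) * F (i+1) with hc
  set w : ℕ → ℝ := fun k => u k * (F k - c) with hwd
  have hwN : pgNeu N w := ⟨by simp only [hwd, hu.1, hFN.1], fun k hk => by
    simp only [hwd, hu.2 k hk, hFN.2 k hk]⟩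
  have uu' : ∑ i ∈ range N, u (i+1) * u (i+1) = 1 := uu
  have huw' : pgip N u w = 0 := by
    have : pgip N u w = c - (∑ i ∈ range N, u (i+1) * u (i+1)) * c := by
      rw [hc, sum_mul, ← hc, ← sum_sub_distrib]
      apply sum_congr rfl
      intro i _
      simp only [hwd]; ring
    rw [this, uu']; ring
  have hww' : 1 ≤ pgip N w w := by
    have d1 := pg_double N (fun i => u (i+1) * u (i+1)) (fun i => f (i+1)) (fun i => f (i+1))
    have d2 := pg_double N (fun i => u (i+1) * u (i+1)) (fun i => F (i+1)) (fun i => F (i+1))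
    simp only [uu'] at d1 d2
    rw [← hc] at d2
    have a1 : ∑ i ∈ range N, u (i+1) * u (i+1) * (f (i+1) * f (i+1)) = 1 := by
      rw [← hww]; apply sum_congr rfl; intro i _; rw [← hfw]; ring
    have a2 : ∑ i ∈ range N, u (i+1) * u (i+1) * f (i+1) = 0 := by
      rw [← huw]; apply sum_congr rfl; intro i _; rw [← hfw]; ring
    rw [a1, a2] at d1
    have a3 : pgip N w w = ∑ i ∈ range N, u (i+1) * u (i+1) * (F (i+1) * F (i+1)) - c * c := by
      have : pgip N w w = ∑ i ∈ range N, u (i+1) * u (i+1) * (F (i+1) * F (i+1))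
          - (∑ i ∈ range N, u (i+1) * u (i+1) * F (i+1)) * (2 * c)
          + (∑ i ∈ range N, u (i+1) * u (i+1)) * (c * c) := by
        rw [sum_mul, sum_mul, ← sum_sub_distrib, ← sum_add_distrib]
        apply sum_congr rfl
        intro i _
        simp only [hwd]; ring
      rw [this, uu', ← hc]; ring
    have : ∑ i ∈ range N, ∑ j ∈ range N, u (i+1) * u (i+1) * (u (j+1) * u (j+1))
          * ((f (i+1) - f (j+1)) * (f (i+1) - f (j+1)))
        ≤ ∑ i ∈ range N, ∑ j ∈ range N, u (i+1) * u (i+1) * (u (j+1) * u (j+1))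
          * ((F (i+1) - F (j+1)) * (F (i+1) - F (j+1))) := by
      apply sum_le_sum; intro i _
      apply sum_le_sum; intro j _
      apply mul_le_mul_of_nonneg_left (hdom2 _ _)
      exact mul_nonneg (mul_self_nonneg _) (mul_self_nonneg _)
    rw [d1, d2] at this
    linarith
  set E := ∑ i ∈ range (N+1), u i * u (i+1) * (f (i+1) - f i)^2 with hE
  have e1 : l2 = l1 + E := by
    have := pg_energy hu su f
    rw [hfw', hww, mul_one] at this
    exact this
  have hE0 : 0 ≤ E := sum_nonneg fun i _ =>
    mul_nonneg (mul_nonneg (pos _).le (pos _).le) (sq_nonneg _)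
  have hEpos : 0 < E := by
    rcases hE0.lt_or_eq with h | h
    · exact h
    · exfalso
      have hz := (sum_eq_zero_iff_of_nonneg (fun i _ =>
        mul_nonneg (mul_nonneg (pos i).le (pos (i+1)).le) (sq_nonneg (f (i+1) - f i)))).1 h.symm
      have hst : ∀ i, i < N + 1 → f (i+1) = f i := by
        intro i hi
        have := hz i (mem_range.2 hi)
        have hp := mul_pos (pos i) (pos (i+1))
        have := (mul_eq_zero.1 this).resolve_left hp.ne'
        have := pow_eq_zero_iff (two_ne_zero) |>.1 this
        linarith
      have hcst : ∀ i, i < N + 1 → f i = f 0 := by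
        intro i
        induction i with
        | zero => intro _; rfl
        | succ n ih => intro h; rw [hst n (by omega), ih (by omega)]
      have h0 : f 0 = 0 := by
        have : pgip N u w0 = (∑ i ∈ range N, u (i+1) * u (i+1)) * f 0 := by
          rw [sum_mul]
          apply sum_congr rfl
          intro i hi
          have := mem_range.1 hi
          rw [← hfw, hcst (i+1) (by omega)]; ring
        rw [uu', huw] at this
        linarith
      have : pgip N w0 w0 = 0 := by
        apply sum_eq_zero
        intro i hi
        have := mem_range.1 hi
        rw [← hfw, hcst (i+1) (by omega), h0]; ring
      linarith
  have e2 : pgB N a b w w = l1 * pgip N w w + E := by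
    have := pg_energy hu su (fun k => F k - c)
    rw [this]
    congr 1
    apply sum_congr rfl
    intro i _
    rw [sub_sub_sub_cancel_right, hFs, sq_abs]
  have sw : pgSol N a b l2 w := by
    apply pg_var (by omega) hu su hwN huw' hmin
    rw [e2, e1]
    nlinarith
  have hwp : 0 < pgip N w w := by linarith
  set s := (Real.sqrt (pgip N w w))⁻¹ with hs
  have hs0 : 0 < s := by positivity
  refine ⟨l1, l2, u, fun k => s * w k + 0 * w k, hu, pgNeu_lin _ _ hwN hwN, su, ?_, uu, ?_, ?_, pos,
    m1, hmin, by linarith, ?_⟩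
  · intro i hi
    have := sw i hi
    linear_combination s * this
  · rw [pgip_sq, hs, inv_pow, Real.sq_sqrt hwp.le, inv_mul_cancel₀ hwp.ne']; ring
  · rw [pgip_comm, pgip_lin, pgip_comm N w, huw']; ring
  · intro i
    have : u i * (s * w (i+1) + 0 * w (i+1)) - u (i+1) * (s * w i + 0 * w i)
        = s * (u i * u (i+1) * (F (i+1) - F i)) := by simp only [hwd]; ring
    rw [this, hFs]
    exact mul_nonneg hs0.le (mul_nonneg (mul_nonneg (pos _).le (pos _).le) (abs_nonneg _))


lemma pg_dec {N : ℕ} {a b l : ℝ} (ha : 0 < a) {U : ℕ → ℝ} (hU : pgNeu N U)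
    (hs : pgSol N a b l U) {k : ℕ} (hk : U (k+1) ≤ U k)
    (hnn : ∀ i, k < i → i ≤ N → 0 ≤ U i) : ∀ j, k ≤ j → j ≤ N → U (j+1) ≤ U j := by
  intro j hkj hjN
  by_cases hW : a * (j:ℝ) + b ≤ l
  · have : ∀ d, k + d ≤ j → U (k+d+1) ≤ U (k+d) := by
      intro d
      induction d with
      | zero => intro _; exact hk
      | succ d ih =>
        intro h
        have h1 := ih (by omega)
        have h2 := hs (k+d) (by omega)
        have h3 := hnn (k+d+1) (by omega) (by omega)
        have h4 : ((k+d:ℕ):ℝ) + 1 ≤ j := by exact_mod_cast h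
        have h5 : a * (((k+d:ℕ):ℝ) + 1) + b - l ≤ 0 := by nlinarith
        have h7 : (a * (((k+d:ℕ):ℝ) + 1) + b - l) * U (k+d+1) ≤ 0 :=
          mul_nonpos_of_nonpos_of_nonneg h5 h3
        rw [← add_assoc]
        show U (k+d+2) ≤ U (k+d+1)
        linarith
    have := this (j-k) (by omega)
    rwa [Nat.add_sub_cancel' hkj] at this
  · push Not at hW
    have : ∀ d i, i + d = N → j ≤ i → U (i+1) ≤ U i := by
      intro d
      induction d with
      | zero =>
        intro i h _
        rw [show i = N by omega, hU.2 (N+1) (by omega)]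
      | succ d ih =>
        intro i h hji
        have h1 := ih (i+1) (by omega) (by omega)
        have h2 := hs i (by omega)
        have h3 := hnn (i+1) (by omega) (by omega)
        have h4 : (j:ℝ) ≤ i := by exact_mod_cast hji
        have h5 : 0 ≤ a * ((i:ℝ) + 1) + b - l := by nlinarith
        have h7 := mul_nonneg h5 h3
        have h8 : U (i+2) ≤ U (i+1) := h1
        linarith
    exact this (N-j) j (by omega) le_rfl

lemma pg_identity {N : ℕ} {a b l : ℝ} {U : ℕ → ℝ} (hU : pgNeu N U) (hs : pgSol N a b l U) :
    (a * N + a / 2 + b - l) * (U N)^2 + (l - a/2 - b) * (U 1)^2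
      = a / 2 * ((2 + b - l) * pgip N U U + a * pgX N U) := by
  have key : ∀ k, k ≤ N → (U k)^2 + (U (k+1))^2 - (2 + a * ((k:ℝ) + 1/2) + b - l) * (U k * U (k+1))
      = (l - a/2 - b) * (U 1)^2 - a / 2 * ((2 + b - l) * pgip k U U + a * pgX k U) := by
    intro k
    induction k with
    | zero =>
      intro _
      simp only [pgip, pgX, Finset.sum_range_zero, zero_add, hU.1]
      push_cast
      ring
    | succ k ih =>
      intro h
      have h1 := ih (by omega)
      have h2 := hs k (by omega)
      have h3 : U (k+2) = (2 + (a * ((k:ℝ)+1) + b) - l) * U (k+1) - U k := by linarith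
      have e1 : pgip (k+1) U U = pgip k U U + U (k+1) * U (k+1) := by
        simp [pgip, Finset.sum_range_succ]
      have e2 : pgX (k+1) U = pgX k U + ((k:ℝ)+1) * (U (k+1) * U (k+1)) := by
        simp [pgX, Finset.sum_range_succ]
      rw [e1, e2]
      show (U (k+1))^2 + (U (k+2))^2 - _ * (U (k+1) * U (k+2)) = _
      rw [h3]
      push_cast
      linear_combination h1
  have := key N le_rfl
  rw [hU.2 (N+1) (by omega)] at this
  linear_combination -this

open Finset in
lemma pg_reflect (N : ℕ) (p : ℕ → ℝ) :
    2 * ∑ i ∈ range N, ((i:ℝ) + 1 - ((N:ℝ)+1)/2) * p (i+1)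
      = ∑ i ∈ range N, ((i:ℝ) + 1 - ((N:ℝ)+1)/2) * (p (i+1) - p (N - i)) := by
  have h := sum_range_reflect (fun i : ℕ => ((i:ℝ) + 1 - ((N:ℝ)+1)/2) * p (i+1)) N
  have h2 : ∑ j ∈ range N, (((N - 1 - j : ℕ):ℝ) + 1 - ((N:ℝ)+1)/2) * p (N - 1 - j + 1)
      = - ∑ i ∈ range N, ((i:ℝ) + 1 - ((N:ℝ)+1)/2) * p (N - i) := by
    rw [← sum_neg_distrib]
    apply sum_congr rfl
    intro i hi
    have hi := mem_range.1 hi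
    rw [show N - 1 - i + 1 = N - i by omega, show N - 1 - i = N - (i + 1) by omega,
      Nat.cast_sub (by omega)]
    push_cast
    ring
  simp only [mul_sub] at *
  rw [sum_sub_distrib]
  linarith

/-- if `X u = X v` then the density differences are nonnegative at the ends -/
lemma pg_ends {N : ℕ} (hN : 2 ≤ N) {a b l1 l2 : ℝ} {u v : ℕ → ℝ} (D : pgData N a b l1 l2 u v)
    (hX : pgX N u = pgX N v) : (u 1)^2 ≤ (v 1)^2 ∧ (u N)^2 ≤ (v N)^2 := by
  set f : ℕ → ℝ := fun k => v k / u k with hf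
  have hfv : ∀ k, v k = u k * f k := fun k => (mul_div_cancel₀ _ (D.pos k).ne').symm
  have hmono : Monotone f := by
    apply monotone_nat_of_le_succ
    intro k
    simp only [hf]
    rw [div_le_div_iff₀ (D.pos _) (D.pos _)]
    linarith [D.mono k]
  have hmom : ∀ t : ℝ, ∑ i ∈ Finset.range N, ((i:ℝ) + t) * ((u (i+1))^2 * ((f (i+1))^2 - 1)) = 0 := by
    intro t
    have : ∑ i ∈ Finset.range N, ((i:ℝ) + t) * ((u (i+1))^2 * ((f (i+1))^2 - 1))
        = (pgX N v - pgX N u) + (t - 1) * (pgip N v v - pgip N u u) := by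
      unfold pgX pgip
      rw [← Finset.sum_sub_distrib, ← Finset.sum_sub_distrib, Finset.mul_sum,
        ← Finset.sum_add_distrib]
      apply Finset.sum_congr rfl
      intro i _
      rw [hfv]; ring
    rw [this, hX, D.vv, D.uu]; ring
  have hneg : ∀ k, f k < 1 → -1 < f k → (u k)^2 * ((f k)^2 - 1) < 0 := by
    intro k h1 h2
    apply mul_neg_of_pos_of_neg (pow_pos (D.pos k) 2)
    nlinarith
  have hnn1 : ∀ k, 1 ≤ f k → 0 ≤ (u k)^2 * ((f k)^2 - 1) := by
    intro k h1
    apply mul_nonneg (sq_nonneg _); nlinarith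
  have hnn2 : ∀ k, f k ≤ -1 → 0 ≤ (u k)^2 * ((f k)^2 - 1) := by
    intro k h1
    apply mul_nonneg (sq_nonneg _); nlinarith
  have hfin : ∀ k, ¬ (f k < 1 ∧ -1 < f k) → (u k)^2 ≤ (v k)^2 := by
    intro k h
    have : 0 ≤ (u k)^2 * ((f k)^2 - 1) := by
      by_cases h1 : f k < 1
      · exact hnn2 k (by by_contra h2; exact h ⟨h1, by linarith⟩)
      · exact hnn1 k (by linarith)
    rw [hfv, mul_pow]; linarith
  constructor
  · apply hfin
    rintro ⟨h1, h2⟩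
    have hall : ∀ k, 1 ≤ k → -1 < f k := fun k hk => lt_of_lt_of_le h2 (hmono hk)
    -- threshold
    obtain ⟨m, hm1, hm2, hm3⟩ : ∃ m : ℕ, 1 ≤ m ∧ (∀ i, i < N → i < m → f (i+1) < 1) ∧
        (∀ i, i < N → m ≤ i → 1 ≤ f (i+1)) := by
      by_cases hex : ∃ i, 1 ≤ f (i+1)
      · refine ⟨Nat.find hex, ?_, ?_, ?_⟩
        · by_contra h
          have h0 : Nat.find hex = 0 := by omega
          have := Nat.find_spec hex
          rw [h0] at this
          simp only [zero_add] at this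
          linarith
        · intro i _ hi
          have := Nat.find_min hex hi
          linarith
        · intro i _ hi
          exact (Nat.find_spec hex).trans (hmono (by omega))
      · push Not at hex
        exact ⟨N, by omega, fun i _ _ => hex i, fun i h1 h2 => by omega⟩
    have hsum := hmom (-(m:ℝ))
    have : 0 < ∑ i ∈ Finset.range N, ((i:ℝ) + (-(m:ℝ))) * ((u (i+1))^2 * ((f (i+1))^2 - 1)) := by
      apply Finset.sum_pos'
      · intro i hi
        have hi := Finset.mem_range.1 hi
        by_cases him : i < m
        · have c1 : (i:ℝ) < m := by exact_mod_cast him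
          have := hneg (i+1) (hm2 i hi him) (hall _ (by omega))
          exact (mul_pos_of_neg_of_neg (by linarith) this).le
        · have c1 : (m:ℝ) ≤ i := by exact_mod_cast (not_lt.1 him)
          exact mul_nonneg (by linarith) (hnn1 _ (hm3 i hi (not_lt.1 him)))
      · refine ⟨0, Finset.mem_range.2 (by omega), ?_⟩
        have c1 : (1:ℝ) ≤ m := by exact_mod_cast hm1
        apply mul_pos_of_neg_of_neg
        · push_cast; linarith
        · exact hneg _ h1 h2
    linarith
  · apply hfin
    rintro ⟨h1, h2⟩
    have hall : ∀ k, k ≤ N → f k < 1 := fun k hk => lt_of_le_of_lt (hmono hk) h1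
    have hex : ∃ i, -1 < f (i+1) := ⟨N - 1, by rwa [Nat.sub_add_cancel (by omega)]⟩
    set m := Nat.find hex with hm
    have hmN : m ≤ N - 1 := Nat.find_min' hex (by rwa [Nat.sub_add_cancel (by omega)])
    have hsum := hmom (-(m:ℝ) + 1/2)
    have : ∑ i ∈ Finset.range N, ((i:ℝ) + (-(m:ℝ) + 1/2)) * ((u (i+1))^2 * ((f (i+1))^2 - 1)) < 0 := by
      rw [← neg_pos, ← Finset.sum_neg_distrib]
      have hge : ∀ i, i < N → m ≤ i →
          0 < -(((i:ℝ) + (-(m:ℝ) + 1/2)) * ((u (i+1))^2 * ((f (i+1))^2 - 1))) := by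
        intro i hi him
        have c1 : (m:ℝ) ≤ i := by exact_mod_cast him
        rw [neg_pos]
        apply mul_neg_of_pos_of_neg (by linarith)
        exact hneg _ (hall _ (by omega)) (lt_of_lt_of_le (Nat.find_spec hex) (hmono (by omega)))
      apply Finset.sum_pos'
      · intro i hi
        have hi := Finset.mem_range.1 hi
        by_cases him : i < m
        · have c1 : (i:ℝ) + 1 ≤ m := by exact_mod_cast him
          have := Nat.find_min hex him
          have := hnn2 (i+1) (by linarith)
          rw [neg_nonneg]
          exact mul_nonpos_of_nonpos_of_nonneg (by linarith) this
        · exact (hge i hi (not_lt.1 him)).le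
      · exact ⟨N-1, Finset.mem_range.2 (by omega), hge _ (by omega) hmN⟩
    linarith


lemma pg_chain {p : ℕ → ℝ} {k n : ℕ} (h : ∀ j, k ≤ j → j < n → p (j+1) ≤ p j) (hkn : k ≤ n) :
    p n ≤ p k := by
  induction n, hkn using Nat.le_induction with
  | base => exact le_rfl
  | succ n hn ih => exact (h n hn (by omega)).trans (ih fun j h1 h2 => h j h1 (by omega))

lemma pg_qc {N : ℕ} {a b l : ℝ} (ha : 0 < a) {U : ℕ → ℝ} (hU : pgNeu N U)
    (hs : pgSol N a b l U) {k j : ℕ} (hkj : k ≤ j) (hj : j ≤ N)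
    (hnn : ∀ i, k < i → i ≤ N → 0 ≤ U i) (hlt : U j < U k) : U N ≤ U j := by
  have : ∃ i, k ≤ i ∧ i < j ∧ U (i+1) ≤ U i := by
    by_contra hc
    push Not at hc
    have := pg_chain (p := fun i => - U i) (k := k) (n := j)
      (fun i h1 h2 => by have := hc i h1 h2; linarith) hkj
    simp only [neg_le_neg_iff] at this
    linarith
  obtain ⟨i, h1, h2, h3⟩ := this
  have := pg_dec ha hU hs h3 (fun i' h h' => hnn i' (by omega) h')
  exact pg_chain (fun j' h h' => this j' (by omega) (by omega)) hj

open Finset in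
lemma pg_center {N : ℕ} {p : ℕ → ℝ} (h : ∀ k, 1 ≤ k → 2 * k ≤ N + 1 → p k ≤ p (N + 1 - k)) :
    0 ≤ ∑ i ∈ range N, ((i:ℝ) + 1 - ((N:ℝ)+1)/2) * p (i+1) ∧
    (2 ≤ N → p 1 < p N → 0 < ∑ i ∈ range N, ((i:ℝ) + 1 - ((N:ℝ)+1)/2) * p (i+1)) := by
  have hr := pg_reflect N p
  have ht : ∀ i ∈ range N, 0 ≤ ((i:ℝ) + 1 - ((N:ℝ)+1)/2) * (p (i+1) - p (N - i)) := by
    intro i hi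
    have hi := mem_range.1 hi
    by_cases hc : 2 * (i + 1) ≤ N + 1
    · have c1 : (2:ℝ) * ((i:ℝ) + 1) ≤ N + 1 := by exact_mod_cast hc
      have := h (i+1) (by omega) hc
      rw [show N + 1 - (i + 1) = N - i by omega] at this
      exact mul_nonneg_of_nonpos_of_nonpos (by linarith) (by linarith)
    · have c1 : (N:ℝ) + 1 ≤ (2:ℝ) * ((i:ℝ) + 1) := by exact_mod_cast (not_le.1 hc).le
      have := h (N - i) (by omega) (by omega)
      rw [show N + 1 - (N - i) = i + 1 by omega] at this
      exact mul_nonneg (by linarith) (by linarith)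
  refine ⟨?_, fun hN hlt => ?_⟩
  · have := sum_nonneg ht
    linarith
  · have : 0 < ∑ i ∈ range N, ((i:ℝ) + 1 - ((N:ℝ)+1)/2) * (p (i+1) - p (N - i)) := by
      apply sum_pos' ht
      refine ⟨0, mem_range.2 (by omega), ?_⟩
      have c1 : (2:ℝ) ≤ N := by exact_mod_cast hN
      apply mul_pos_of_neg_of_neg
      · push_cast; linarith
      · simpa using hlt
    linarith

open Finset in
lemma pg_sumid (N : ℕ) : ∑ i ∈ range N, ((i:ℝ)+1) = N * (N + 1) / 2 := by
  induction N with
  | zero => simp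
  | succ n ih => rw [sum_range_succ, ih]; push_cast; ring

open Finset in
lemma pg_B_ge (N : ℕ) {a : ℝ} (ha : 0 ≤ a) (b : ℝ) (U : ℕ → ℝ) :
    (a + b) * pgip N U U ≤ pgB N a b U U := by
  unfold pgB pgip
  have h1 : 0 ≤ ∑ i ∈ range (N+1), (U (i+1) - U i) * (U (i+1) - U i) :=
    sum_nonneg fun i _ => mul_self_nonneg _
  have h2 : ∑ i ∈ range N, (a + b) * (U (i+1) * U (i+1))
      ≤ ∑ i ∈ range N, (a * ((i:ℝ)+1) + b) * (U (i+1) * U (i+1)) := by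
    apply sum_le_sum
    intro i _
    apply mul_le_mul_of_nonneg_right _ (mul_self_nonneg _)
    have : (0:ℝ) ≤ i := by positivity
    nlinarith
  rw [mul_sum]; linarith

open Finset in
lemma pg_l1_le {N : ℕ} (hN : 2 ≤ N) {a b l1 l2 : ℝ} {u v : ℕ → ℝ} (D : pgData N a b l1 l2 u v) :
    l1 ≤ a * ((N + 1) / 2) + b := by
  have h := D.m1 (fun _ => 1) ⟨rfl, fun _ _ => rfl⟩
  have e1 : pgip N (fun _ => 1) (fun _ => 1) = N := by simp [pgip]
  have e2 : pgB N a b (fun _ => 1) (fun _ => 1) = a * (N * (N+1)/2) + b * N := by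
    unfold pgB
    simp only [sub_self, mul_zero, sum_const_zero, zero_add, mul_one, sum_add_distrib, ← mul_sum]
    rw [← sum_add_distrib, pg_sumid]; simp; ring
  rw [e1, e2] at h
  have : (0:ℝ) < N := by positivity
  have h3 : l1 * N ≤ (a * ((N + 1) / 2) + b) * N := by linarith
  exact le_of_mul_le_mul_right h3 this

lemma pg_crit1 {N : ℕ} (hN : 2 ≤ N) {a b l1 l2 : ℝ} (ha : 0 < a) {u v : ℕ → ℝ}
    (D : pgData N a b l1 l2 u v) (hX : pgX N u = pgX N v) : (v 1)^2 < (v N)^2 := by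
  obtain ⟨e1, e2⟩ := pg_ends hN D hX
  have i1 := pg_identity D.hu D.su
  have i2 := pg_identity D.hv D.sv
  rw [D.uu, hX] at i1
  rw [D.vv] at i2
  have hc : a + b ≤ l1 := by
    have := pg_B_ge N ha.le b u
    rw [pgB_sol D.hu D.su, D.uu] at this
    linarith
  have hc2 := pg_l1_le hN D
  have hN' : (2:ℝ) ≤ N := by exact_mod_cast hN
  have hlt := D.lt
  have p1 : 0 ≤ (l1 - a/2 - b) * ((v 1)^2 - (u 1)^2) :=
    mul_nonneg (by linarith) (by linarith)
  have p2 : 0 ≤ (a * N + a/2 + b - l1) * ((v N)^2 - (u N)^2) :=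
    mul_nonneg (by nlinarith) (by linarith)
  have p3 : 0 < a / 2 * (l2 - l1) := by apply mul_pos <;> linarith
  have : 0 < (l2 - l1) * ((v N)^2 - (v 1)^2) := by nlinarith
  have := (mul_pos_iff_of_pos_left (by linarith)).1 this
  linarith

open Finset in
lemma pg_crit {N : ℕ} (hN : 2 ≤ N) {a b l1 l2 : ℝ} (ha : 0 < a) {u v : ℕ → ℝ}
    (D : pgData N a b l1 l2 u v) (hX : pgX N u = pgX N v) : False := by
  have hsq := pg_crit1 hN ha D hX
  obtain ⟨e1, e2⟩ := pg_ends hN D hX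
  have hN' : (2:ℝ) ≤ N := by exact_mod_cast hN
  set f : ℕ → ℝ := fun k => v k / u k with hf
  have hfv : ∀ k, v k = u k * f k := fun k => (mul_div_cancel₀ _ (D.pos k).ne').symm
  have hmono : Monotone f := by
    apply monotone_nat_of_le_succ
    intro k
    simp only [hf]
    rw [div_le_div_iff₀ (D.pos _) (D.pos _)]
    linarith [D.mono k]
  have hneg : ∀ {j k}, j ≤ k → v k < 0 → v j < 0 := by
    intro j k h1 h2
    rw [hfv] at h2 ⊢
    have : f k < 0 := by
      by_contra hc
      have := mul_nonneg (D.pos k).le (not_lt.1 hc)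
      linarith
    exact mul_neg_of_pos_of_neg (D.pos j) (lt_of_le_of_lt (hmono h1) this)
  have hnonneg : ∀ {j k}, j ≤ k → 0 ≤ v j → 0 ≤ v k := by
    intro j k h1 h2
    by_contra hc
    have := hneg h1 (not_le.1 hc)
    linarith
  have hup : ∀ j, j ≤ N → u (j+1) ≤ u j := fun j hj =>
    pg_dec ha D.hu D.su (k := 0) (by rw [D.hu.1]) (fun i _ _ => (D.pos i).le) j (by omega) hj
  have huanti : ∀ {i j}, i ≤ j → j ≤ N → u j ≤ u i := fun h1 h2 =>
    pg_chain (fun j _ h => hup j (by omega)) h1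
  have hu1 := D.pos 1
  have huN := D.pos N
  have huv := D.uv
  unfold pgip at huv
  have hv1 : v 1 < 0 := by
    by_contra hc
    have h0 : 0 ≤ v 1 := not_lt.1 hc
    have h1 : 0 < v 1 := by
      rcases h0.lt_or_eq with h | h
      · exact h
      · rw [← h] at e1; nlinarith
    have : 0 < ∑ i ∈ range N, u (i+1) * v (i+1) := by
      apply sum_pos'
      · exact fun i _ => mul_nonneg (D.pos _).le (hnonneg (by omega) h0)
      · exact ⟨0, mem_range.2 (by omega), mul_pos (D.pos _) h1⟩
    linarith
  have hvN : 0 < v N := by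
    by_contra hc
    have h0 : v N < 0 := by
      rcases (not_lt.1 hc).lt_or_eq with h | h
      · exact h
      · rw [h] at e2; nlinarith
    have : 0 < ∑ i ∈ range N, -(u (i+1) * v (i+1)) := by
      apply sum_pos
      · intro i hi
        have := hneg (j := i+1) (by have := mem_range.1 hi; omega) h0
        have := mul_neg_of_pos_of_neg (D.pos (i+1)) this
        linarith
      · exact ⟨0, mem_range.2 (by omega)⟩
    rw [sum_neg_distrib] at this
    linarith
  have hmu : - v 1 < v N := by nlinarith
  have hv1k : ∀ k, 1 ≤ k → k ≤ N → v 1 ≤ v k := by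
    intro k h1 h2
    have c1 := huanti h1 h2
    have c2 := hmono h1
    have c3 : f 1 < 0 := div_neg_of_neg_of_pos hv1 hu1
    rw [hfv 1, hfv k]
    have := D.pos k
    nlinarith
  have sturm : ∀ k m, k + 1 + m = N → 2 * k ≤ N + 1 → v k < 0 →
      - v k ≤ v (m+2) ∧ v k * v (m+1) ≤ v (k+1) * v (m+2) := by
    intro k
    induction k with
    | zero =>
      intro m hm _ h0
      have q1 : v (m+2) = v N := by rw [D.hv.2 (m+2) (by omega)]
      have q2 : v (m+1) = v N := by rw [show m + 1 = N by omega]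
      rw [q1, q2, D.hv.1]
      exact ⟨hmu.le, le_rfl⟩
    | succ k ih =>
      intro m hm hk h0
      have h1 : v k < 0 := hneg (by omega) h0
      obtain ⟨i1, i2⟩ := ih (m+1) (by omega) (by omega) h1
      have s1 := D.sv k (by omega)
      have s2 := D.sv (m+1) (by omega)
      simp only [show m+1+2 = m+3 by rfl, show m+1+1 = m+2 by rfl, show k+1+1 = k+2 by rfl] at *
      have c1 : - v (k+1) ≤ v (m+2) := by
        have : (- v k) * (-v (k+1)) ≤ (-v k) * v (m+2) := by nlinarith
        exact le_of_mul_le_mul_left this (by linarith)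
      refine ⟨c1, ?_⟩
      have c2 : (k:ℝ) ≤ m + 1 := by exact_mod_cast (show k ≤ m + 1 by omega)
      have c3 : 0 ≤ (v (m+2) * (- v (k+1))) * (a * ((m:ℝ) + 1 - k)) :=
        mul_nonneg (mul_nonneg (by linarith) (by linarith)) (mul_nonneg ha.le (by linarith))
      push_cast at s2
      nlinarith [c3, i2, congrArg (fun x => v (k+1) * x) s2, congrArg (fun x => v (m+2) * x) s1]
  -- X u is small
  have hXu : pgX N u ≤ ((N:ℝ)+1)/2 := by
    have := (pg_center (N := N) (p := fun k => - (u k)^2) (by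
      intro k h1 h2
      have := huanti (i := k) (j := N + 1 - k) (by omega) (by omega)
      have := D.pos (N+1-k)
      simp only [neg_le_neg_iff]
      nlinarith)).1
    have e : ∑ i ∈ range N, ((i:ℝ) + 1 - ((N:ℝ)+1)/2) * (-(u (i+1))^2)
        = ((N:ℝ)+1)/2 * pgip N u u - pgX N u := by
      unfold pgip pgX
      rw [mul_sum, ← sum_sub_distrib]
      apply sum_congr rfl; intro i _; ring
    rw [e, D.uu] at this
    linarith
  suffices hXv : ((N:ℝ)+1)/2 < pgX N v by linarith
  by_cases hcase : ∀ k, 1 ≤ k → 2 * k ≤ N + 1 → 0 ≤ v k → v k ≤ v (N + 1 - k)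
  · have := (pg_center (N := N) (p := fun k => (v k)^2) (by
      intro k h1 h2
      by_cases h0 : 0 ≤ v k
      · have := hcase k h1 h2 h0
        nlinarith
      · push Not at h0
        have := (sturm k (N - 1 - k) (by omega) h2 h0).1
        rw [show N - 1 - k + 2 = N + 1 - k by omega] at this
        nlinarith)).2 hN hsq
    have e : ∑ i ∈ range N, ((i:ℝ) + 1 - ((N:ℝ)+1)/2) * ((v (i+1))^2)
        = pgX N v - ((N:ℝ)+1)/2 * pgip N v v := by
      unfold pgip pgX
      rw [mul_sum, ← sum_sub_distrib]
      apply sum_congr rfl; intro i _; ring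
    rw [e, D.vv] at this
    linarith
  · push Not at hcase
    obtain ⟨k, k1, k2, k3, k4⟩ := hcase
    have q1 := pg_qc ha D.hv D.sv (k := k) (j := N + 1 - k) (by omega) (by omega)
      (fun i h _ => hnonneg h.le k3) k4
    have hex : ∃ s, - v 1 ≤ v s := ⟨k, by linarith⟩
    set s := Nat.find hex with hs
    have hsk : s ≤ k := Nat.find_min' hex (by linarith)
    have hss : - v 1 ≤ v s := Nat.find_spec hex
    have hlo : ∀ j, 1 ≤ j → j < s → (v j)^2 ≤ (v 1)^2 := by
      intro j h1 h2
      have c1 := Nat.find_min hex h2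
      have c2 := hv1k j h1 (by omega)
      push Not at c1
      nlinarith
    have hhi' : ∀ j, s ≤ j → j ≤ N → - v 1 ≤ v j := by
      intro j h1 h2
      by_contra hc
      have := pg_qc ha D.hv D.sv (k := s) (j := j) h1 h2
        (fun i h _ => hnonneg h.le (by linarith)) (by linarith)
      linarith
    have hhi : ∀ j, s ≤ j → j ≤ N → (v 1)^2 ≤ (v j)^2 := by
      intro j h1 h2
      have := hhi' j h1 h2
      nlinarith
    have hMN : 1 ≤ (v 1)^2 * N := by
      have h1 : pgip N u u ≤ ∑ i ∈ range N, (v 1)^2 := by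
        unfold pgip
        apply sum_le_sum
        intro i hi
        have := huanti (i := 1) (j := i+1) (by omega) (by have := mem_range.1 hi; omega)
        have := D.pos (i+1)
        nlinarith
      rw [D.uu, sum_const, card_range, nsmul_eq_mul] at h1
      linarith
    have hpos : 0 < ∑ i ∈ range N, ((i:ℝ) + 1 - s) * ((v (i+1))^2 - (v 1)^2) := by
      apply sum_pos'
      · intro i hi
        have hi := mem_range.1 hi
        by_cases hc : i + 1 < s
        · have c1 : (i:ℝ) + 1 ≤ s := by exact_mod_cast hc.le
          have := hlo (i+1) (by omega) hc
          exact mul_nonneg_of_nonpos_of_nonpos (by linarith) (by linarith)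
        · have c1 : (s:ℝ) ≤ i + 1 := by exact_mod_cast not_lt.1 hc
          have := hhi (i+1) (by omega) (by omega)
          exact mul_nonneg (by linarith) (by linarith)
      · refine ⟨N-1, mem_range.2 (by omega), ?_⟩
        have c1 : (s:ℝ) + 1 ≤ (N-1:ℕ) + 1 := by exact_mod_cast (show s + 1 ≤ N - 1 + 1 by omega)
        apply mul_pos (by linarith)
        rw [Nat.sub_add_cancel (by omega)]
        linarith
    have e : ∑ i ∈ range N, ((i:ℝ) + 1 - s) * ((v (i+1))^2 - (v 1)^2)
        = pgX N v - s * pgip N v v - (v 1)^2 * (N * (N+1)/2) + s * (v 1)^2 * N := by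
      rw [← pg_sumid]
      have : s * (v 1)^2 * N = ∑ i ∈ range N, s * (v 1)^2 := by simp; ring
      rw [this]
      unfold pgip pgX
      rw [mul_sum, mul_sum, ← sum_sub_distrib, ← sum_sub_distrib, ← sum_add_distrib]
      apply sum_congr rfl; intro i _; ring
    rw [e, D.vv] at hpos
    have c4 : (2:ℝ) * s ≤ N + 1 := by exact_mod_cast (show 2 * s ≤ N + 1 by omega)
    nlinarith [mul_nonneg (sub_nonneg.2 hMN) (sub_nonneg.2 c4)]


lemma pg_split {N : ℕ} {a b l1 l2 : ℝ} {u v : ℕ → ℝ} (D : pgData N a b l1 l2 u v)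
    {Y : ℕ → ℝ} (hY : pgNeu N Y) :
    l1 * (pgip N u Y)^2 + l2 * (pgip N Y Y - (pgip N u Y)^2) ≤ pgB N a b Y Y := by
  set α := pgip N u Y with hα
  have h1 := D.m2 (fun k => 1 * Y k + (-α) * u k) (pgNeu_lin _ _ hY D.hu) (by
    rw [pgip_comm, pgip_lin, D.uu, pgip_comm N Y u, ← hα]; ring)
  rw [pgip_sq, pgB_sq, D.uu, pgB_comm N a b Y u, pgB_sol D.hu D.su, pgB_sol D.hu D.su, D.uu,
    pgip_comm N Y u, ← hα] at h1
  linarith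

lemma pg_bessel {N : ℕ} {w x y : ℕ → ℝ} (hw : pgip N w w = 1) (hx : pgip N x x = 1)
    (hy : pgip N y y = 1) (hxy : pgip N x y = 0) : (pgip N w x)^2 + (pgip N w y)^2 ≤ 1 := by
  set α := pgip N w x with hα
  set β := pgip N w y with hβ
  have h := pgip_nonneg N (fun k => 1 * w k + (-1) * (fun k => α * x k + β * y k) k)
  rw [pgip_sq, pgip_sq, hw, hx, hy, hxy, pgip_comm N w, pgip_lin, pgip_comm N x w,
    pgip_comm N y w, ← hα, ← hβ] at h
  nlinarith

lemma pg_kyfan {N : ℕ} {a b l1 l2 : ℝ} {u v : ℕ → ℝ} (D : pgData N a b l1 l2 u v)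
    {x y : ℕ → ℝ} (nx : pgNeu N x) (ny : pgNeu N y) (hx : pgip N x x = 1)
    (hy : pgip N y y = 1) (hxy : pgip N x y = 0) : l1 + l2 ≤ pgB N a b x x + pgB N a b y y := by
  have h1 := pg_split D nx
  have h2 := pg_split D ny
  have h3 := pg_bessel D.uu hx hy hxy
  have h4 := mul_nonneg (sub_nonneg.2 D.lt.le) (sub_nonneg.2 h3)
  rw [hx] at h1
  rw [hy] at h2
  linarith

lemma pg_up1 {N : ℕ} {a a' b l1 l2 l1' l2' : ℝ} {u v u' v' : ℕ → ℝ}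
    (D : pgData N a b l1 l2 u v) (D' : pgData N a' b l1' l2' u' v') :
    l1' ≤ l1 + (a' - a) * pgX N u := by
  have := D'.m1 u D.hu
  rw [pgB_shift N a a', pgB_sol D.hu D.su, D.uu] at this
  linarith

lemma pg_up2 {N : ℕ} {a a' b l1 l2 l1' l2' : ℝ} {u v u' v' : ℕ → ℝ}
    (D : pgData N a b l1 l2 u v) (D' : pgData N a' b l1' l2' u' v') :
    l1' + l2' ≤ l1 + l2 + (a' - a) * (pgX N u + pgX N v) := by
  have := pg_kyfan D' D.hu D.hv D.uu D.vv D.uv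
  rw [pgB_shift N a a', pgB_sol D.hu D.su, D.uu, pgB_shift N a a', pgB_sol D.hv D.sv, D.vv] at this
  linarith

lemma pg_lip {N : ℕ} {a a' b l1 l2 l1' l2' : ℝ} {u v u' v' : ℕ → ℝ}
    (D : pgData N a b l1 l2 u v) (D' : pgData N a' b l1' l2' u' v') :
    l2' - l1' ≤ l2 - l1 + 4 * N * |a' - a| := by
  have h1 := pg_up2 D D'
  have h2 := pg_up1 D' D
  have k1 := pgX_bound N u
  have k2 := pgX_bound N v
  have k3 := pgX_bound N u'
  rw [D.uu] at k1
  rw [D.vv] at k2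
  rw [D'.uu] at k3
  have p1 : (a' - a) * (pgX N u + pgX N v) ≤ |a' - a| * (2 * N) :=
    mul_le_mul (le_abs_self _) (by linarith) (by linarith) (abs_nonneg _)
  have p2 : (a - a') * pgX N u' ≤ |a' - a| * N := by
    rw [abs_sub_comm]
    exact mul_le_mul (le_abs_self _) (by linarith) (by linarith) (abs_nonneg _)
  linarith

open Finset in
lemma pg_xclose {N : ℕ} {a a' b l1 l2 l1' l2' : ℝ} {u v u' v' : ℕ → ℝ}
    (D : pgData N a b l1 l2 u v) (D' : pgData N a' b l1' l2' u' v') :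
    (pgX N u' - pgX N u)^2 * (l2 - l1) ≤ 4 * N^3 * |a' - a| := by
  have h1 := pg_split D D'.hu
  have h2 := pg_up1 D D'
  have h3 := pgB_shift N a' a b u'
  rw [pgB_sol D'.hu D'.su, D'.uu] at h3
  rw [D'.uu] at h1
  set α := pgip N u u' with hα
  have k1 := pgX_bound N u
  have k3 := pgX_bound N u'
  rw [D.uu] at k1
  rw [D'.uu] at k3
  have h4 : (a' - a) * (pgX N u - pgX N u') ≤ |a' - a| * N := by
    refine (le_abs_self _).trans ?_
    rw [abs_mul]
    apply mul_le_mul_of_nonneg_left _ (abs_nonneg _)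
    rw [abs_le]; constructor <;> linarith
  have h5 : (l2 - l1) * (1 - α^2) ≤ |a' - a| * N := by linarith
  have cs : (pgX N u' - pgX N u)^2 ≤ 4 * N^2 * (1 - α^2) := by
    have e : pgX N u' - pgX N u = ∑ i ∈ range N,
        (((i:ℝ)+1) * (u' (i+1) - u (i+1))) * (u' (i+1) + u (i+1)) := by
      unfold pgX
      rw [← sum_sub_distrib]
      apply sum_congr rfl; intro i _; ring
    rw [e]
    have c1 := sum_mul_sq_le_sq_mul_sq (range N) (fun i : ℕ => ((i:ℝ)+1) * (u' (i+1) - u (i+1)))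
      (fun i => u' (i+1) + u (i+1))
    have c2 : ∑ i ∈ range N, (((i:ℝ)+1) * (u' (i+1) - u (i+1)))^2 ≤ N^2 * (2 - 2 * α) := by
      have : (2:ℝ) - 2 * α = ∑ i ∈ range N, (u' (i+1) - u (i+1))^2 := by
        have : ∑ i ∈ range N, (u' (i+1) - u (i+1))^2 = pgip N u' u' - 2 * pgip N u u' + pgip N u u := by
          unfold pgip
          rw [mul_sum, ← sum_sub_distrib, ← sum_add_distrib]
          apply sum_congr rfl; intro i _; ring
        rw [this, D.uu, D'.uu]; ring
      rw [this, mul_sum]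
      apply sum_le_sum
      intro i hi
      rw [mul_pow]
      apply mul_le_mul_of_nonneg_right _ (sq_nonneg _)
      have : (i:ℝ) + 1 ≤ N := by exact_mod_cast mem_range.1 hi
      apply pow_le_pow_left₀ (by positivity) this
    have c3 : ∑ i ∈ range N, (u' (i+1) + u (i+1))^2 = 2 + 2 * α := by
      have : ∑ i ∈ range N, (u' (i+1) + u (i+1))^2 = pgip N u' u' + 2 * pgip N u u' + pgip N u u := by
        unfold pgip
        rw [mul_sum, ← sum_add_distrib, ← sum_add_distrib]
        apply sum_congr rfl; intro i _; ring
      rw [this, D.uu, D'.uu]; ring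
    have c4 : 0 ≤ ∑ i ∈ range N, (u' (i+1) + u (i+1))^2 := sum_nonneg fun _ _ => sq_nonneg _
    have c5 := mul_le_mul_of_nonneg_right c2 c4
    rw [c3] at c5 c1
    refine c1.trans (c5.trans (le_of_eq ?_))
    ring
  have hg : 0 ≤ l2 - l1 := by linarith [D.lt]
  calc _ ≤ 4 * N^2 * (1 - α^2) * (l2 - l1) := mul_le_mul_of_nonneg_right cs hg
    _ = 4 * N^2 * ((l2 - l1) * (1 - α^2)) := by ring
    _ ≤ 4 * N^2 * (|a' - a| * N) := mul_le_mul_of_nonneg_left h5 (by positivity)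
    _ = _ := by ring

lemma pg_critpt {N : ℕ} (hN : 2 ≤ N) {a b l1 l2 : ℝ} {u v : ℕ → ℝ}
    (D : pgData N a b l1 l2 u v) {ε : ℝ} (hε : 0 < ε)
    (hmin : ∀ a' l1' l2' u' v', |a' - a| < ε → pgData N a' b l1' l2' u' v' → l2 - l1 ≤ l2' - l1') :
    pgX N u = pgX N v := by
  by_contra hne
  set d := pgX N v - pgX N u with hd
  have hd0 : d ≠ 0 := by intro h; apply hne; linarith
  have hg : 0 < l2 - l1 := by linarith [D.lt]
  have hN' : (2:ℝ) ≤ N := by exact_mod_cast hN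
  set q := d^2 * (l2 - l1) / (32 * N^3) with hq
  have hqp : 0 < q := by positivity
  set τ := min (ε/2) q with hτ
  have hτ0 : 0 < τ := lt_min (by linarith) hqp
  have hτε : τ < ε := lt_of_le_of_lt (min_le_left _ _) (by linarith)
  have main : ∀ t, |t| = τ → t * d < 0 → False := by
    intro t ht htd
    obtain ⟨l1', l2', u', v', D'⟩ := pg_data hN (a + t) b
    have e1 : a + t - a = t := by ring
    have h0 := hmin _ _ _ _ _ (by rw [e1, ht]; exact hτε) D'
    have h1 := pg_up2 D D'
    have h2 := pg_up1 D' D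
    have h3 := pg_xclose D D'
    rw [e1] at h1 h3
    rw [show a - (a + t) = -t by ring] at h2
    rw [ht] at h3
    set r := pgX N u' - pgX N u with hr
    have h4 : 0 ≤ t * (d - 2 * r) := by
      rw [hd, hr]; linarith
    -- t d <0 and t d ≥ 2 t r
    have h5 : t^2 * d^2 ≤ t^2 * (4 * r^2) := by nlinarith
    have ht2 : 0 < t^2 := by rw [← sq_abs, ht]; positivity
    have h6 : d^2 ≤ 4 * r^2 := le_of_mul_le_mul_left h5 ht2
    have h7 : 4 * (N:ℝ)^3 * τ ≤ 4 * N^3 * q := mul_le_mul_of_nonneg_left (min_le_right _ _) (by positivity)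
    have h8 : 4 * (N:ℝ)^3 * q = d^2 * (l2 - l1) / 8 := by
      rw [hq]; field_simp; ring
    have h9 : 0 < d^2 * (l2 - l1) := by positivity
    nlinarith
  rcases lt_or_gt_of_ne hd0 with h | h
  · exact main τ (abs_of_pos hτ0) (mul_neg_of_pos_of_neg hτ0 h)
  · exact main (-τ) (by rw [abs_neg, abs_of_pos hτ0]) (by nlinarith)

open Finset in
lemma pg_large {N : ℕ} (hN : 2 ≤ N) {a b l1 l2 : ℝ} (ha : 0 ≤ a) {u v : ℕ → ℝ}
    (D : pgData N a b l1 l2 u v) : a - 2 ≤ l2 - l1 := by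
  set e : ℕ → ℝ := pgcl N (fun k => if k = 1 then 1 else 0) with he
  have en : pgNeu N e := pgcl_neu (by omega) _
  have ei : ∀ i, i < N → e (i+1) = if i = 0 then 1 else 0 := by
    intro i hi
    rw [he, pgcl_eq _ hi]
    simp
  have eip : ∀ U, pgip N e U = U 1 := by
    intro U
    unfold pgip
    rw [sum_eq_single 0]
    · rw [ei 0 (by omega)]; simp
    · intro i hi h
      rw [ei i (mem_range.1 hi), if_neg h, zero_mul]
    · intro h; exact absurd (mem_range.2 (by omega)) h
  have e1 : e 1 = 1 := by rw [ei 0 (by omega)]; simp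
  have e2 : e 2 = 0 := by rw [ei 1 (by omega)]; simp
  have e0 : e 0 = 1 := by rw [en.1, e1]
  have eB : pgB N a b e e = 1 + a + b := by
    rw [pgB_eq en, sum_eq_single 0]
    · simp only [zero_add, e0, e1, e2]; push_cast; ring
    · intro i hi h
      rw [ei i (mem_range.1 hi), if_neg h, mul_zero]
    · intro h; exact absurd (mem_range.2 (by omega)) h
  have h1 := D.m1 e en
  rw [eB, eip, e1] at h1
  have h2 := pg_bessel (w := e) (by rw [eip, e1]) D.uu D.vv D.uv
  rw [eip, eip] at h2
  have hX : ∀ U, 2 * pgip N U U - (U 1)^2 ≤ pgX N U := by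
    intro U
    have : (U 1)^2 = ∑ i ∈ range N, if i = 0 then (U (i+1))^2 else 0 := by
      rw [sum_ite_eq' (range N) 0 (fun i => (U (i+1))^2), if_pos (mem_range.2 (by omega))]
    rw [this]
    unfold pgip pgX
    rw [mul_sum, ← sum_sub_distrib]
    apply sum_le_sum
    intro i _
    rcases Nat.eq_zero_or_pos i with h | h
    · subst h; simp; nlinarith
    · rw [if_neg (by omega)]
      have : (1:ℝ) ≤ i := by exact_mod_cast h
      nlinarith [mul_self_nonneg (U (i+1))]
  have x1 := hX u
  have x2 := hX v
  have b1 := pgB_shift N 0 a b u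
  have b2 := pgB_shift N 0 a b v
  have g1 := pg_B_ge N le_rfl b u
  have g2 := pg_B_ge N le_rfl b v
  rw [pgB_sol D.hu D.su, D.uu] at b1
  rw [pgB_sol D.hv D.sv, D.vv] at b2
  rw [D.uu] at g1 x1
  rw [D.vv] at g2 x2
  nlinarith

lemma pg_min {N : ℕ} (hN : 2 ≤ N) {a : ℝ} (ha : 0 ≤ a) (b : ℝ) :
    ∃ l1 l2 u v m1 m2 u' v', pgData N a b l1 l2 u v ∧ pgData N 0 b m1 m2 u' v' ∧
      m2 - m1 ≤ l2 - l1 := by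
  choose l1 l2 u v hD using fun a => pg_data hN a b
  refine ⟨_, _, _, _, _, _, _, _, hD a, hD 0, ?_⟩
  set G : ℝ → ℝ := fun a => l2 a - l1 a with hG
  have hlip : LipschitzWith (4 * N : NNReal) G := by
    apply LipschitzWith.of_le_add_mul
    intro x y
    have := pg_lip (hD y) (hD x)
    rw [Real.dist_eq]
    push_cast
    exact this
  show G 0 ≤ G a
  set A := max a (G 0 + 3) with hA
  have hA0 : 0 ≤ A := ha.trans (le_max_left _ _)
  obtain ⟨x, hx, hxm⟩ := (isCompact_Icc (a := (0:ℝ)) (b := A)).exists_isMinOn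
    ⟨0, le_rfl, hA0⟩ hlip.continuous.continuousOn
  have hxm' : ∀ y, 0 ≤ y → y ≤ A → G x ≤ G y := fun y h1 h2 => hxm ⟨h1, h2⟩
  rcases hx.1.lt_or_eq with h0 | h0
  · exfalso
    have hxA : x < A := by
      rcases hx.2.lt_or_eq with h | h
      · exact h
      · have k1 : A - 2 ≤ G A := pg_large hN hA0 (hD A)
        have k2 := hxm' 0 le_rfl hA0
        have k3 : G 0 + 3 ≤ A := le_max_right _ _
        rw [h] at k2
        linarith
    have huniq : ∀ a' l1' l2' u' v', pgData N a' b l1' l2' u' v' → G a' ≤ l2' - l1' := by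
      intro a' l1' l2' u' v' D'
      have := pg_lip D' (hD a')
      simp only [sub_self, abs_zero, mul_zero, add_zero] at this
      exact this
    refine pg_crit hN h0 (hD x) (pg_critpt hN (hD x) (lt_min h0 (sub_pos.2 hxA)) ?_)
    intro a' l1' l2' u' v' h D'
    have h1 := (abs_lt.1 (h.trans_le (min_le_left _ _))).1
    have h2 := (abs_lt.1 (h.trans_le (min_le_right _ _))).2
    exact (hxm' a' (by linarith) (by linarith)).trans (huniq _ _ _ _ _ D')
  · rw [h0]
    exact hxm' a ha (le_max_left _ _)


open Finset in
lemma pg_zero {N : ℕ} (hN : 2 ≤ N) {b l1 l2 : ℝ} {u v : ℕ → ℝ} (D : pgData N 0 b l1 l2 u v) :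
    l2 - l1 = 2 * (1 - Real.cos (Real.pi / N)) := by
  have hN' : (2:ℝ) ≤ N := by exact_mod_cast hN
  have hN0 : (0:ℝ) < N := by linarith
  have hl1 : l1 = b := by
    apply le_antisymm
    · have := pg_l1_le hN D
      linarith
    · have := pg_B_ge N le_rfl b u
      rw [pgB_sol D.hu D.su, D.uu] at this
      linarith
  subst hl1
  have hstep : ∀ k, k ≤ N → u (k+1) = u k := by
    intro k
    induction k with
    | zero => intro _; exact D.hu.1.symm
    | succ k ih =>
      intro h
      have h1 := ih (by omega)
      have h2 := D.su k (by omega)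
      rw [h1] at h2
      show u (k+2) = u (k+1)
      rw [h1]; linarith
  have hc : ∀ k, k ≤ N → u (k+1) = u 0 := by
    intro k
    induction k with
    | zero => intro _; exact D.hu.1.symm
    | succ k ih =>
      intro h
      rw [hstep _ h, ih (by omega)]
  have hu0 := D.pos 0
  have hvm : ∀ k, k < N → v (k+1) ≤ v (k+2) := by
    intro k hk
    have := D.mono (k+1)
    rw [hc k (by omega), show k + 1 + 1 = k + 2 by rfl, show k + 2 = (k+1)+1 by rfl,
      hc (k+1) (by omega), ← mul_sub] at this
    have := nonneg_of_mul_nonneg_right this hu0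
    show v (k+1) ≤ v (k+1+1)
    linarith
  have hvmono : ∀ i j, i ≤ j → j < N → v (i+1) ≤ v (j+1) := by
    intro i j h1 h2
    have := pg_chain (p := fun k => - v (k+1)) (k := i) (n := j)
      (fun k _ h => by have := hvm k (by omega); simp only [neg_le_neg_iff]; exact this) h1
    simpa using this
  have hvs : ∑ i ∈ range N, v (i+1) = 0 := by
    have := D.uv
    unfold pgip at this
    rw [sum_congr rfl (fun i hi => by
      rw [hc i (mem_range.1 hi).le]) (g := fun i => u 0 * v (i+1)), ← mul_sum] at this
    rcases mul_eq_zero.1 this with h | h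
    · exact absurd h hu0.ne'
    · exact h
  set c : ℕ → ℝ := fun k => Real.cos (Real.pi * ((k:ℝ) - 1/2) / N) with hcdef
  set C := pgcl N c with hC
  have hCn : pgNeu N C := pgcl_neu (by omega) _
  have hCe : ∀ k, k ≤ N + 1 → C k = c k := by
    intro k hk
    rcases Nat.eq_zero_or_pos k with h | h
    · subst h
      rw [hCn.1, hC, pgcl_eq c (i := 0) (by omega)]
      simp only [hcdef]
      rw [← Real.cos_neg]
      congr 1; push_cast; ring
    · rcases hk.lt_or_eq with h' | h'
      · obtain ⟨i, rfl⟩ : ∃ i, k = i + 1 := ⟨k-1, by omega⟩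
        rw [hC, pgcl_eq c (by omega)]
      · subst h'
        rw [hCn.2 _ (by omega)]
        obtain ⟨i, hi⟩ : ∃ i, N = i + 1 := ⟨N-1, by omega⟩
        have : C N = c N := by rw [hC, hi, pgcl_eq c (by omega)]
        rw [this]
        simp only [hcdef]
        rw [← Real.cos_neg, ← Real.cos_add_two_pi]
        congr 1; push_cast; field_simp; ring
  have hCs : pgSol N 0 l1 (l1 + 2 * (1 - Real.cos (Real.pi / N))) C := by
    intro i hi
    rw [hCe _ (by omega), hCe _ (by omega), hCe _ (by omega)]
    simp only [hcdef]
    have e1 : Real.pi * (((i+2:ℕ):ℝ) - 1/2) / N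
        = Real.pi * (((i+1:ℕ):ℝ) - 1/2) / N + Real.pi / N := by push_cast; ring
    have e2 : Real.pi * ((i:ℝ) - 1/2) / N
        = Real.pi * (((i+1:ℕ):ℝ) - 1/2) / N - Real.pi / N := by push_cast; ring
    rw [e1, e2, Real.cos_add, Real.cos_sub]
    ring
  have hsym : (l2 - (l1 + 2 * (1 - Real.cos (Real.pi / N)))) * pgip N v C = 0 := by
    have h1 := pgB_sol D.hv D.sv C
    have h2 := pgB_sol hCn hCs v
    rw [pgB_comm, pgip_comm N C v] at h2
    linarith
  rcases mul_eq_zero.1 hsym with h | h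
  · linarith
  · exfalso
    have hCanti : ∀ i j, i < j → j < N → C (j+1) < C (i+1) := by
      intro i j h1 h2
      rw [hCe _ (by omega), hCe _ (by omega)]
      simp only [hcdef]
      have q1 : (i:ℝ) + 1 ≤ j := by exact_mod_cast h1
      have q2 : (j:ℝ) + 1 ≤ N := by exact_mod_cast h2
      have q3 : (0:ℝ) ≤ i := by positivity
      have hpi := Real.pi_pos
      apply Real.cos_lt_cos_of_nonneg_of_le_pi
      · apply div_nonneg _ hN0.le
        apply mul_nonneg hpi.le; push_cast; linarith
      · rw [div_le_iff₀ hN0]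
        apply mul_le_mul_of_nonneg_left _ hpi.le
        push_cast; linarith
      · apply div_lt_div_of_pos_right _ hN0
        apply mul_lt_mul_of_pos_left _ hpi
        push_cast; linarith
    have hd := pg_double N (fun _ => 1) (fun i => v (i+1)) (fun i => C (i+1))
    simp only [one_mul, hvs, zero_mul, sub_zero] at hd
    have h' : ∑ i ∈ range N, v (i+1) * C (i+1) = 0 := h
    rw [h', mul_zero, mul_zero] at hd
    have hterm : ∀ i ∈ range N, ∀ j ∈ range N,
        (v (i+1) - v (j+1)) * (C (i+1) - C (j+1)) ≤ 0 := by
      intro i hi j hj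
      rcases lt_trichotomy i j with h | h | h
      · have k1 := hCanti i j h (mem_range.1 hj)
        have k2 := hvmono i j h.le (mem_range.1 hj)
        exact mul_nonpos_of_nonpos_of_nonneg (by linarith) (by linarith)
      · subst h; simp
      · have k1 := hCanti j i h (mem_range.1 hi)
        have k2 := hvmono j i h.le (mem_range.1 hi)
        exact mul_nonpos_of_nonneg_of_nonpos (by linarith) (by linarith)
    have h0 := (sum_eq_zero_iff_of_nonpos (fun i hi => sum_nonpos (hterm i hi))).1 hd 0
      (mem_range.2 (by omega))
    have h00 := (sum_eq_zero_iff_of_nonpos (hterm 0 (mem_range.2 (by omega)))).1 h0 (N-1)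
      (mem_range.2 (by omega))
    have k1 := hCanti 0 (N-1) (by omega) (by omega)
    have hvv : v (0+1) = v (N-1+1) := by
      rcases mul_eq_zero.1 h00 with h | h <;> linarith
    have hconst : ∀ i, i < N → v (i+1) = v (0+1) := by
      intro i hi
      apply le_antisymm
      · rw [hvv]; exact hvmono i (N-1) (by omega) (by omega)
      · exact hvmono 0 i (by omega) hi
    rw [sum_congr rfl (fun i hi => hconst i (mem_range.1 hi)), sum_const, card_range,
      nsmul_eq_mul] at hvs
    have hv0 : v (0+1) = 0 := by
      rcases mul_eq_zero.1 hvs with h | h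
      · linarith
      · exact h
    have hvv := D.vv
    unfold pgip at hvv
    rw [sum_eq_zero (fun i hi => by rw [hconst i (mem_range.1 hi), hv0, mul_zero])] at hvv
    exact zero_ne_one hvv

def pgE (N : ℕ) (a b μ : ℝ) : Prop := ∃ U, pgNeu N U ∧ pgSol N a b μ U ∧ 0 < pgip N U U

lemma pg_refl1 {N : ℕ} {a b μ : ℝ} (h : pgE N a b μ) : pgE N (-a) (a * (N + 1) + b) μ := by
  obtain ⟨U, hU, hs, hp⟩ := h
  refine ⟨fun k => U (N + 1 - k), ⟨?_, ?_⟩, ?_, ?_⟩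
  · show U (N + 1 - 0) = U (N + 1 - 1)
    simp only [Nat.sub_zero, Nat.add_sub_cancel]
    exact hU.2 _ (by omega)
  · intro k hk
    show U (N + 1 - k) = U (N + 1 - N)
    rw [show N + 1 - k = 0 by omega, show N + 1 - N = 1 by omega, hU.1]
  · intro i hi
    obtain ⟨m, rfl⟩ : ∃ m, N = i + 1 + m := ⟨N - (i+1), by omega⟩
    show U (i + 1 + m + 1 - (i+2)) + U (i + 1 + m + 1 - i) = _ * U (i + 1 + m + 1 - (i+1))
    rw [show i + 1 + m + 1 - (i+2) = m by omega, show i + 1 + m + 1 - i = m + 2 by omega,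
      show i + 1 + m + 1 - (i+1) = m + 1 by omega]
    have := hs m (by omega)
    push_cast
    linear_combination this
  · have e : pgip N (fun k => U (N + 1 - k)) (fun k => U (N + 1 - k)) = pgip N U U := by
      unfold pgip
      rw [← Finset.sum_range_reflect]
      apply Finset.sum_congr rfl
      intro i hi
      have := Finset.mem_range.1 hi
      simp only [show N + 1 - (N - 1 - i + 1) = i + 1 by omega]
    rw [e]; exact hp

lemma pg_refl {N : ℕ} {a b μ : ℝ} : pgE N a b μ ↔ pgE N (-a) (a * (N + 1) + b) μ := by
  refine ⟨pg_refl1, fun h => ?_⟩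
  have := pg_refl1 h
  rwa [neg_neg, show -a * ((N:ℝ) + 1) + (a * (N + 1) + b) = b by ring] at this

lemma pg_ident {N : ℕ} {a b l1 l2 m1 m2 : ℝ} {u v : ℕ → ℝ} (D : pgData N a b m1 m2 u v)
    (h1 : pgE N a b l1) (h2 : pgE N a b l2) (hlt : l1 < l2)
    (hall : ∀ μ, pgE N a b μ → l1 ≤ μ ∧ (μ ≠ l1 → l2 ≤ μ)) : l1 = m1 ∧ l2 = m2 := by
  have E1 : pgE N a b m1 := ⟨u, D.hu, D.su, by rw [D.uu]; exact one_pos⟩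
  have E2 : pgE N a b m2 := ⟨v, D.hv, D.sv, by rw [D.vv]; exact one_pos⟩
  have q1 : l1 = m1 := by
    apply le_antisymm (hall _ E1).1
    obtain ⟨U, hU, hs, hp⟩ := h1
    have := D.m1 U hU
    rw [pgB_sol hU hs] at this
    exact le_of_mul_le_mul_right this hp
  refine ⟨q1, ?_⟩
  subst q1
  apply le_antisymm ((hall _ E2).2 D.lt.ne')
  obtain ⟨U, hU, hs, hp⟩ := h2
  have s1 := pgB_sol hU hs u
  have s2 := pgB_sol D.hu D.su U
  rw [pgB_comm, pgip_comm N U u] at s1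
  have : (l2 - l1) * pgip N u U = 0 := by linarith
  have huU : pgip N u U = 0 := by
    rcases mul_eq_zero.1 this with h | h
    · linarith
    · exact h
  have := D.m2 U hU huU
  rw [pgB_sol hU hs] at this
  exact le_of_mul_le_mul_right this hp

open Finset in
lemma pg_mulVec {N : ℕ} (hN : 2 ≤ N) (W : ℕ → ℝ) {U : ℕ → ℝ} (hU : pgNeu N U) (i : Fin N) :
    (pathH N W).mulVec (fun j : Fin N => U ((j:ℕ)+1)) i
      = (2 + W ((i:ℕ)+1)) * U ((i:ℕ)+1) - U ((i:ℕ)+2) - U (i:ℕ) := by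
  obtain ⟨i, hi⟩ := i
  set d : ℝ := if i = 0 ∨ i = N - 1 then 1 else 2 with hd
  have e : (pathH N W).mulVec (fun j : Fin N => U ((j:ℕ)+1)) ⟨i, hi⟩
      = ∑ j ∈ range N, ((if j = i then (d + W (i+1)) * U (j+1) else 0)
        - (if j = i + 1 then U (j+1) else 0) - (if i = j + 1 then U (j+1) else 0)) := by
    rw [← Fin.sum_univ_eq_sum_range (fun j => (if j = i then (d + W (i+1)) * U (j+1) else 0)
        - (if j = i + 1 then U (j+1) else 0) - (if i = j + 1 then U (j+1) else 0)) N]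
    unfold Matrix.mulVec dotProduct
    apply sum_congr rfl
    rintro ⟨j, hj⟩ _
    simp only [pathH, Matrix.of_apply, Fin.mk.injEq]
    rcases lt_trichotomy i j with h | h | h
    · rw [if_neg (show ¬ i = j by omega), if_neg (show ¬ j = i by omega),
        if_neg (show ¬ i = j + 1 by omega)]
      by_cases h' : i + 1 = j
      · rw [if_pos (Or.inl h'), if_pos h'.symm]; ring
      · rw [if_neg (by omega), if_neg (by omega)]; ring
    · subst h
      simp [hd]
    · rw [if_neg (show ¬ i = j by omega), if_neg (show ¬ j = i by omega),
        if_neg (show ¬ j = i + 1 by omega)]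
      by_cases h' : i = j + 1
      · rw [if_pos (Or.inr h'.symm), if_pos h']; ring
      · rw [if_neg (by omega), if_neg (by omega)]; ring
  rw [e, sum_sub_distrib, sum_sub_distrib, sum_ite_eq', sum_ite_eq', if_pos (mem_range.2 hi)]
  have e3 : ∑ j ∈ range N, (if i = j + 1 then U (j+1) else 0) = if i = 0 then 0 else U i := by
    by_cases h0 : i = 0
    · rw [if_pos h0]
      apply sum_eq_zero
      intro j _
      rw [if_neg (by omega)]
    · rw [if_neg h0, sum_eq_single (i-1)]
      · rw [if_pos (by omega), show i - 1 + 1 = i by omega]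
      · intro j _ hj
        rw [if_neg (by omega)]
      · intro h
        exact absurd (mem_range.2 (by omega)) h
  rw [e3]
  simp only [mem_range]
  by_cases h0 : i = 0
  · subst h0
    rw [if_pos rfl, if_pos (by omega)]
    simp only [hd, true_or, if_true, hU.1, zero_add]
    ring
  · rw [if_neg h0]
    by_cases h1 : i = N - 1
    · rw [if_neg (by omega)]
      have k1 : U (i+2) = U (i+1) := by
        rw [hU.2 (i+2) (by omega), show i + 1 = N by omega]
      simp only [hd, h1, or_true, if_true]
      rw [← h1, k1]; ring
    · rw [if_pos (by omega), hd, if_neg (by omega)]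

lemma pg_eigen {N : ℕ} (hN : 2 ≤ N) (a b μ : ℝ) :
    IsEigen (pathH N (fun i => a * (i:ℝ) + b)) μ ↔ pgE N a b μ := by
  constructor
  · rintro ⟨x, hx, hm⟩
    set U := pgcl N (fun k => if h : k - 1 < N then x ⟨k-1, h⟩ else 0) with hU
    have hn : pgNeu N U := pgcl_neu (by omega) _
    have hUx : ∀ i (hi : i < N), U (i+1) = x ⟨i, hi⟩ := by
      intro i hi
      rw [hU, pgcl_eq _ hi]
      simp [hi]
    have hxe : (fun j : Fin N => U ((j:ℕ)+1)) = x := by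
      funext j; exact hUx j.1 j.2
    refine ⟨U, hn, ?_, ?_⟩
    · intro i hi
      have h1 := pg_mulVec hN (fun i => a * (i:ℝ) + b) hn ⟨i, hi⟩
      rw [hxe, hm] at h1
      simp only [Pi.smul_apply, smul_eq_mul] at h1
      rw [← hUx i hi] at h1
      push_cast at h1
      linear_combination h1
    · rcases (pgip_nonneg N U).lt_or_eq with h | h
      · exact h
      · exfalso
        apply hx
        funext j
        unfold pgip at h
        have := (Finset.sum_eq_zero_iff_of_nonneg (fun i _ => mul_self_nonneg (U (i+1)))).1 h.symm
          j.1 (Finset.mem_range.2 j.2)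
        rw [hUx j.1 j.2] at this
        exact mul_self_eq_zero.1 this
  · rintro ⟨U, hn, hs, hp⟩
    refine ⟨fun j : Fin N => U ((j:ℕ)+1), ?_, ?_⟩
    · intro h
      have : pgip N U U = 0 := by
        unfold pgip
        apply Finset.sum_eq_zero
        intro i hi
        have := congrFun h ⟨i, Finset.mem_range.1 hi⟩
        simp only [Pi.zero_apply] at this
        rw [this, mul_zero]
      linarith
    · funext i
      rw [pg_mulVec hN _ hn i]
      have := hs i.1 i.2
      simp only [Pi.smul_apply, smul_eq_mul]
      push_cast
      linear_combination -this

lemma pg_final {N : ℕ} (hN : 2 ≤ N) {a b l1 l2 : ℝ} (ha : 0 ≤ a)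
    (h1 : pgE N a b l1) (h2 : pgE N a b l2) (hlt : l1 < l2)
    (hall : ∀ μ, pgE N a b μ → l1 ≤ μ ∧ (μ ≠ l1 → l2 ≤ μ)) :
    2 * (1 - Real.cos (Real.pi / N)) ≤ l2 - l1 := by
  obtain ⟨k1, k2, u, v, m1, m2, u', v', D, D', hle⟩ := pg_min hN ha b
  obtain ⟨rfl, rfl⟩ := pg_ident D h1 h2 hlt hall
  rw [← pg_zero hN D']
  exact hle

/-- for every `N ≥ 2` and linear potential `L i = a * i + b`, the
fundamental gap of `H_L(P_N)` is at least `2(1 - cos(π/N))`, with equality when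
`a = 0`. -/
theorem path_gap_linear (N : ℕ) (hN : 2 ≤ N) (a b : ℝ)
    (l1 l2 : ℝ)
    (h : TwoSmallest (pathH N (fun i => a * (i : ℝ) + b)) l1 l2) :
    l2 - l1 ≥ 2 * (1 - Real.cos (Real.pi / N)) ∧
    (a = 0 → l2 - l1 = 2 * (1 - Real.cos (Real.pi / N))) := by

  obtain ⟨h1, h2, hlt, hall⟩ := h
  simp only [pg_eigen hN] at h1 h2 hall
  constructor
  · rcases le_total 0 a with ha | ha
    · exact pg_final hN ha h1 h2 hlt hall
    · rw [pg_refl] at h1 h2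
      exact pg_final hN (neg_nonneg.2 ha) h1 h2 hlt (fun μ hμ => hall μ (pg_refl.2 hμ))
  · rintro rfl
    obtain ⟨m1, m2, u, v, D⟩ := pg_data hN 0 b
    obtain ⟨rfl, rfl⟩ := pg_ident D h1 h2 hlt hall
    exact pg_zero hN D
end
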